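/- Let d ≥ 2 and n > d + 1 be integers and define K = (1 + d/(2n)) · (1/sqrt(2n)) · ∫_0^∞ [ 1 − ( γ(d/2, y) / Γ(d/2) )^n ] / sqrt(y) dy − sqrt(d/n), where γ(s, y) = ∫_0^y t^{s−1} e^{−t} dt is the lower incomplete gamma function and Γ is the gamma function. Suppose ε > 0 satisfies K < ε. If U is a random n×d matrix drawn from the symmetric measure on the Stiefel manifold St(n,d), with rows u_1,…,u_n, then the probability that max_{1 ≤ i ≤ n} ‖u_i‖ − sqrt(d/n) ≥ ε is at most exp( − (n−2)(ε − K)² / 8 ). -/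

import Mathlib

open MeasureTheory ProbabilityTheory Real Matrix

noncomputable section

/-- Matrices over a measurable space carry the (Borel) product measurable structure. -/
instance matrixMeasurableSpace {m n α : Type*} [MeasurableSpace α] :
    MeasurableSpace (Matrix m n α) :=
  inferInstanceAs (MeasurableSpace (m → n → α))

/-- The Euclidean norm of the `i`-th row of an `n × d` real matrix. -/
def rowNorm {n d : ℕ} (U : Matrix (Fin n) (Fin d) ℝ) (i : Fin n) : ℝ :=
  Real.sqrt (∑ j : Fin d, (U i j) ^ 2)

/-- The lower incomplete gamma function `γ(s, y) = ∫_0^y t^{s-1} e^{-t} dt`. -/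
def lowerIncGamma (s y : ℝ) : ℝ :=
  ∫ t in (0 : ℝ)..y, t ^ (s - 1) * Real.exp (-t)

/-- The exact expectation-type constant
`K = (1 + d/(2n)) · (1/√(2n)) · ∫_0^∞ (1 - (γ(d/2, y)/Γ(d/2))^n)/√y dy − √(d/n)`. -/
def stiefelK (d n : ℕ) : ℝ :=
  (1 + (d : ℝ) / (2 * n)) * (1 / Real.sqrt (2 * n)) *
      (∫ y in Set.Ioi (0 : ℝ),
        (1 - (lowerIncGamma ((d : ℝ) / 2) y / Real.Gamma ((d : ℝ) / 2)) ^ n) / Real.sqrt y)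
    - Real.sqrt ((d : ℝ) / n)

/-!
Testing `U` against an independent Gaussian vector shows that each squared row norm has the law
`Beta(d/2, (n-d)/2)`, so a row norm has a strongly log-concave density `f` on `[0, 1]`. Let `F` be
its distribution function and `m = ∫ (1 - F ^ n)` the mean of the maximum of `n` independent copies.
Since `F` is log-concave, `n * (1 - F M) ≤ 1` for every `M ≥ m`, and past such an `M` the tail of
`f` decays like a Gaussian, so the union bound over the rows loses no factor `n` beyond `m`.
To bound `m`, multiply the beta variable by an independent `Gamma(n/2)` variable, which turns it
into a `Gamma(d/2)` variable: by Jensen's inequality the mean of the maximum of `n` gamma roots, the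
integral defining `stiefelK`, dominates `m` times the mean of the root of the factor.
-/

open Set intervalIntegral
open scoped ENNReal RealInnerProductSpace

lemma le_integral_one_sub_pow_of_le_exp {F : ℝ → ℝ} {a b c r : ℝ} {N : ℕ}
    (hFc : ContinuousOn F (Icc a b)) (hF : ∀ x ∈ Icc a b, F x ∈ Icc 0 1) (hN : N ≠ 0)
    (hc : 0 < c) (hr : r ∈ Icc a b) (hbound : ∀ x ∈ Icc a b, F x ≤ exp (c * (x - r))) :
    r - a - 1 / (N * c) ≤ ∫ x in a..b, (1 - F x ^ N) := by
  have hab : a ≤ b := hr.1.trans hr.2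
  have hint {u v : ℝ} (hu : u ∈ Icc a b) (hv : v ∈ Icc a b) :
      IntervalIntegrable (fun x => 1 - F x ^ N) volume u v :=
    ((continuousOn_const.sub (hFc.pow N)).mono (uIcc_subset_Icc hu hv)).intervalIntegrable
  have hexp : ∫ x in a..r, exp (N * c * (x - r)) ≤ 1 / (N * c) := by
    have hNc : (N : ℝ) * c ≠ 0 := by positivity
    simp_rw [mul_sub, integral_comp_mul_sub (fun x => exp x) hNc, integral_exp, sub_self, exp_zero,
      smul_eq_mul, one_div]
    exact mul_le_of_le_one_right (by positivity) (by linarith [exp_pos (N * c * a - N * c * r)])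
  calc r - a - 1 / (N * c) ≤ r - a - ∫ x in a..r, exp (N * c * (x - r)) := by gcongr
    _ = ∫ x in a..r, (1 - exp (N * c * (x - r))) := by
        rw [integral_sub intervalIntegrable_const (Continuous.intervalIntegrable (by fun_prop) _ _),
          intervalIntegral.integral_const, smul_eq_mul, mul_one]
    _ ≤ ∫ x in a..r, (1 - F x ^ N) := by
        refine integral_mono_on hr.1 (Continuous.intervalIntegrable (by fun_prop) _ _)
          (hint (left_mem_Icc.2 hab) hr) fun x hx => ?_
        have hx' : x ∈ Icc a b := ⟨hx.1, hx.2.trans hr.2⟩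
        rw [mul_assoc, exp_nat_mul]
        gcongr
        · exact (hF x hx').1
        · exact hbound x hx'
    _ ≤ ∫ x in a..b, (1 - F x ^ N) := by
        rw [← integral_add_adjacent_intervals (hint (left_mem_Icc.2 hab) hr)
          (hint hr (right_mem_Icc.2 hab))]
        refine le_add_of_nonneg_right (integral_nonneg hr.2 fun x hx => ?_)
        have hx' := hF x ⟨hr.1.trans hx.1, hx.2⟩
        exact sub_nonneg.2 (pow_le_one₀ hx'.1 hx'.2)

/-- `f` is strongly log-concave on `[a, b]` with modulus `α`: its logarithmic derivative `ψ`
(the score) exists on `(a, b)` and drops at rate at least `α` there. The function may vanish at the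
endpoints, and `α = 0` is ordinary log-concavity. -/
structure IsStronglyLogConcave (α : ℝ) (f ψ : ℝ → ℝ) (a b : ℝ) : Prop where
  continuousOn : ContinuousOn f (Icc a b)
  pos : ∀ x ∈ Ioo a b, 0 < f x
  hasDerivAt : ∀ x ∈ Ioo a b, HasDerivAt f (f x * ψ x) x
  score_le : ∀ x ∈ Ioo a b, ∀ y ∈ Ioo a b, x ≤ y → ψ y + α * (y - x) ≤ ψ x

namespace IsStronglyLogConcave

variable {α a b x y M N t c : ℝ} {f ψ : ℝ → ℝ}

lemma mono {β : ℝ} (hf : IsStronglyLogConcave α f ψ a b) (hβ : β ≤ α) :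
    IsStronglyLogConcave β f ψ a b where
  continuousOn := hf.continuousOn
  pos := hf.pos
  hasDerivAt := hf.hasDerivAt
  score_le x hx y hy hxy := by
    have := mul_le_mul_of_nonneg_right hβ (sub_nonneg.2 hxy)
    linarith [hf.score_le x hx y hy hxy]

lemma score_antitone (hf : IsStronglyLogConcave 0 f ψ a b) : AntitoneOn ψ (Ioo a b) :=
  fun x hx y hy hxy => by simpa using hf.score_le x hx y hy hxy

lemma comp_neg (hf : IsStronglyLogConcave α f ψ a b) :
    IsStronglyLogConcave α (fun x => f (-x)) (fun x => -ψ (-x)) (-b) (-a) where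
  continuousOn := hf.continuousOn.comp continuousOn_neg fun x hx =>
    ⟨by linarith [hx.2], by linarith [hx.1]⟩
  pos x hx := hf.pos _ ⟨by linarith [hx.2], by linarith [hx.1]⟩
  hasDerivAt x hx := by
    have h := hf.hasDerivAt (-x) ⟨by linarith [hx.2], by linarith [hx.1]⟩
    simpa [Function.comp_def] using h.scomp x (hasDerivAt_neg x)
  score_le x hx y hy hxy := by
    linarith [hf.score_le (-y) ⟨by linarith [hy.2], by linarith [hy.1]⟩ (-x)
      ⟨by linarith [hx.2], by linarith [hx.1]⟩ (neg_le_neg hxy)]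

lemma nonneg (hf : IsStronglyLogConcave α f ψ a b) (hab : a < b) (hx : x ∈ Icc a b) :
    0 ≤ f x := by
  rw [← closure_Ioo hab.ne] at hx
  exact le_on_closure (fun z hz => (hf.pos z hz).le) continuousOn_const
    (closure_Ioo hab.ne ▸ hf.continuousOn) hx

lemma le_mul_exp_of_le (hf : IsStronglyLogConcave α f ψ a b) (hx : x ∈ Ioo a b) (hxy : x ≤ y)
    (hyb : y ≤ b) : f y ≤ f x * exp (ψ x * (y - x) - α * (y - x) ^ 2 / 2) := by
  set q : ℝ → ℝ := fun z => ψ x * (z - x) - α * (z - x) ^ 2 / 2 with hq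
  have hq' (z : ℝ) : HasDerivAt q (ψ x - α * (z - x)) z := by
    have h := (hasDerivAt_id z).sub_const x
    refine ((h.const_mul (ψ x)).sub (((h.pow 2).const_mul α).div_const 2)).congr_deriv ?_
    simp only [id_eq, Nat.cast_ofNat]
    ring
  have hanti : AntitoneOn (fun z => f z * exp (-q z)) (Icc x b) := by
    refine antitoneOn_of_hasDerivWithinAt_nonpos (convex_Icc x b)
      ((hf.continuousOn.mono (Icc_subset_Icc_left hx.1.le)).mul
        fun z _ => (hq' z).neg.exp.continuousAt.continuousWithinAt)
      (f' := fun z => f z * exp (-q z) * (ψ z - (ψ x - α * (z - x))))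
      (fun z hz => ?_) (fun z hz => ?_)
    all_goals
      rw [interior_Icc] at hz
      have hz' : z ∈ Ioo a b := ⟨hx.1.trans hz.1, hz.2⟩
    · refine (((hf.hasDerivAt z hz').mul (hq' z).neg.exp).congr_deriv ?_).hasDerivWithinAt
      simp only [Pi.neg_apply]
      ring
    · exact mul_nonpos_of_nonneg_of_nonpos (mul_nonneg (hf.pos z hz').le (exp_pos _).le)
        (by linarith [hf.score_le x hx z hz' hz.1.le])
  have h := hanti (left_mem_Icc.2 hx.2.le) ⟨hxy, hyb⟩ hxy
  have hqx : q x = 0 := by simp [hq]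
  simp only [hqx, neg_zero, exp_zero, mul_one] at h
  rwa [Real.exp_neg, ← div_eq_mul_inv, div_le_iff₀ (exp_pos _)] at h

lemma le_mul_exp (hf : IsStronglyLogConcave α f ψ a b) (hx : x ∈ Ioo a b) (hy : y ∈ Icc a b) :
    f y ≤ f x * exp (ψ x * (y - x) - α * (y - x) ^ 2 / 2) := by
  rcases le_total x y with hxy | hyx
  · exact hf.le_mul_exp_of_le hx hxy hy.2
  · have h := hf.comp_neg.le_mul_exp_of_le (x := -x) (y := -y)
      ⟨neg_lt_neg hx.2, neg_lt_neg hx.1⟩ (neg_le_neg hyx) (neg_le_neg hy.1)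
    simp only [neg_neg] at h
    convert h using 3
    ring

lemma intervalIntegrable (hf : IsStronglyLogConcave α f ψ a b) (hx : x ∈ Icc a b)
    (hy : y ∈ Icc a b) : IntervalIntegrable f volume x y :=
  (hf.continuousOn.mono (uIcc_subset_Icc hx hy)).intervalIntegrable

lemma hasDerivAt_integral (hf : IsStronglyLogConcave α f ψ a b) (hx : x ∈ Ioo a b) :
    HasDerivAt (fun z => ∫ s in a..z, f s) (f x) x := by
  have hmeas : StronglyMeasurableAtFilter f (nhds x) :=
    (hf.continuousOn.mono Ioo_subset_Icc_self).stronglyMeasurableAtFilter isOpen_Ioo x hx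
  exact integral_hasDerivAt_right
    (hf.intervalIntegrable (left_mem_Icc.2 (hx.1.trans hx.2).le) (Ioo_subset_Icc_self hx)) hmeas
    (hf.hasDerivAt x hx).continuousAt

lemma continuousOn_integral (hf : IsStronglyLogConcave α f ψ a b) :
    ContinuousOn (fun x => ∫ s in a..x, f s) (Icc a b) := by
  rcases le_or_gt a b with hab | hab
  · rw [← uIcc_of_le hab]
    exact continuousOn_primitive_interval
      ((uIcc_of_le hab ▸ hf.continuousOn).integrableOn_compact isCompact_uIcc)
  · simp [Icc_eq_empty hab.not_ge]

lemma integral_pos (hf : IsStronglyLogConcave α f ψ a b) (hx : x ∈ Icc a b) (hy : y ∈ Icc a b)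
    (hxy : x < y) : 0 < ∫ s in x..y, f s :=
  intervalIntegral_pos_of_pos_on (hf.intervalIntegrable hx hy)
    (fun s hs => hf.pos s ⟨hx.1.trans_lt hs.1, hs.2.trans_le hy.2⟩) hxy

lemma score_mul_integral_le (hf : IsStronglyLogConcave 0 f ψ a b) (hx : x ∈ Ioo a b) :
    ψ x * ∫ s in a..x, f s ≤ f x := by
  have hab : a < b := hx.1.trans hx.2
  have hmono : MonotoneOn (fun z => f z - ψ x * ∫ s in a..z, f s) (Icc a x) := by
    refine monotoneOn_of_hasDerivWithinAt_nonneg (convex_Icc a x)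
      ((hf.continuousOn.sub (continuousOn_const.mul hf.continuousOn_integral)).mono
        (Icc_subset_Icc_right hx.2.le)) (f' := fun z => f z * ψ z - ψ x * f z)
      (fun z hz => ?_) (fun z hz => ?_)
    all_goals
      rw [interior_Icc] at hz
      have hz' : z ∈ Ioo a b := ⟨hz.1, hz.2.trans hx.2⟩
    · exact ((hf.hasDerivAt z hz').sub
        ((hf.hasDerivAt_integral hz').const_mul (ψ x))).hasDerivWithinAt
    · linarith [mul_le_mul_of_nonneg_left (hf.score_antitone hz' hx hz.2.le) (hf.pos z hz').le]
  have h := hmono (left_mem_Icc.2 hx.1.le) (right_mem_Icc.2 hx.1.le) hx.1.le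
  simp only [integral_same, mul_zero, sub_zero] at h
  linarith [hf.nonneg hab (left_mem_Icc.2 hab.le)]

/-- The one-dimensional case of Prékopa's theorem. -/
lemma integral_left (hf : IsStronglyLogConcave 0 f ψ a b) :
    IsStronglyLogConcave 0 (fun x => ∫ s in a..x, f s) (fun x => f x / ∫ s in a..x, f s) a b := by
  have hpos (x : ℝ) (hx : x ∈ Ioo a b) : 0 < ∫ s in a..x, f s :=
    hf.integral_pos (left_mem_Icc.2 (hx.1.trans hx.2).le) (Ioo_subset_Icc_self hx) hx.1
  have hderiv (x : ℝ) (hx : x ∈ Ioo a b) := (hf.hasDerivAt x hx).div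
    (hf.hasDerivAt_integral hx) (hpos x hx).ne'
  refine ⟨hf.continuousOn_integral, hpos, fun x hx => ?_, fun x hx y hy hxy => ?_⟩
  · simpa only [mul_div_cancel₀ _ (hpos x hx).ne'] using hf.hasDerivAt_integral hx
  · have hanti : AntitoneOn (fun z => f z / ∫ s in a..z, f s) (Ioo a b) := by
      refine antitoneOn_of_hasDerivWithinAt_nonpos (convex_Ioo a b)
        (fun z hz => (hderiv z hz).continuousAt.continuousWithinAt)
        (fun z hz => (hderiv z (interior_subset hz)).hasDerivWithinAt) fun z hz => ?_
      have hz := interior_subset hz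
      refine div_nonpos_of_nonpos_of_nonneg ?_ (sq_nonneg _)
      linarith [mul_le_mul_of_nonneg_left (hf.score_mul_integral_le hz) (hf.pos z hz).le]
    simpa using hanti hx hy hxy

lemma integral_right (hf : IsStronglyLogConcave 0 f ψ a b) :
    IsStronglyLogConcave 0 (fun x => ∫ s in x..b, f s) (fun x => -(f x / ∫ s in x..b, f s))
      a b := by
  simpa using hf.comp_neg.integral_left.comp_neg

lemma integral_right_le_of_score_nonpos (hf : IsStronglyLogConcave α f ψ a b) (hα : 0 ≤ α)
    (hM : M ∈ Ioo a b) (hψ : ψ M ≤ 0) (ht : 0 ≤ t) (htb : M + t ≤ b) :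
    ∫ x in (M + t)..b, f x ≤ exp (-(α * t ^ 2 / 2)) * ∫ x in M..b, f x := by
  have hab : a < b := hM.1.trans hM.2
  have hMI : M ∈ Icc a b := Ioo_subset_Icc_self hM
  have hbI : b ∈ Icc a b := right_mem_Icc.2 hab.le
  have hbt : b - t ∈ Icc a b := ⟨by linarith [hM.1], by linarith⟩
  have hshift (x : ℝ) (hx : x ∈ Ioo M (b - t)) : f (x + t) ≤ exp (-(α * t ^ 2 / 2)) * f x := by
    have hx' : x ∈ Ioo a b := ⟨hM.1.trans hx.1, by linarith [hx.2]⟩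
    have hψx : ψ x * t ≤ 0 := mul_nonpos_of_nonpos_of_nonneg
      (((hf.mono hα).score_antitone hM hx' hx.1.le).trans hψ) ht
    calc f (x + t) ≤ f x * exp (ψ x * (x + t - x) - α * (x + t - x) ^ 2 / 2) :=
          hf.le_mul_exp hx' ⟨by linarith [hx'.1], by linarith [hx.2]⟩
      _ ≤ f x * exp (-(α * t ^ 2 / 2)) := by
          gcongr
          · exact (hf.pos x hx').le
          · rw [add_sub_cancel_left]; linarith
      _ = exp (-(α * t ^ 2 / 2)) * f x := mul_comm _ _
  calc ∫ x in (M + t)..b, f x = ∫ x in M..(b - t), f (x + t) := by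
        rw [integral_comp_add_right f t, sub_add_cancel]
    _ ≤ ∫ x in M..(b - t), exp (-(α * t ^ 2 / 2)) * f x := by
        refine integral_mono_on_of_le_Ioo (by linarith) ?_
          ((hf.intervalIntegrable hMI hbt).const_mul _) hshift
        simpa using (hf.intervalIntegrable (x := M + t) (y := b)
          ⟨by linarith [hM.1], htb⟩ hbI).comp_add_right t
    _ = exp (-(α * t ^ 2 / 2)) * ∫ x in M..(b - t), f x := integral_const_mul _ _
    _ ≤ exp (-(α * t ^ 2 / 2)) * ∫ x in M..b, f x := by
        gcongr
        rw [← integral_add_adjacent_intervals (hf.intervalIntegrable hMI hbt)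
          (hf.intervalIntegrable hbt hbI)]
        exact le_add_of_nonneg_right <| integral_nonneg (by linarith) fun x hx =>
          hf.nonneg hab ⟨hbt.1.trans hx.1, hx.2⟩

lemma integral_right_le_of_score_nonneg (hf : IsStronglyLogConcave 0 f ψ a b)
    (hM : M ∈ Ioo a b) (hψ : 0 ≤ ψ M) (hN : N * ∫ x in M..b, f x ≤ ∫ x in a..b, f x)
    (ht : 0 ≤ t) (htb : M + t ≤ b) :
    ∫ x in (M + t)..b, f x ≤ exp (-((N - 1) / (M - a) * t)) * ∫ x in M..b, f x := by
  have hab : a < b := hM.1.trans hM.2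
  have hMI : M ∈ Icc a b := Ioo_subset_Icc_self hM
  have haI : a ∈ Icc a b := left_mem_Icc.2 hab.le
  have hbI : b ∈ Icc a b := right_mem_Icc.2 hab.le
  have htail : 0 < ∫ x in M..b, f x := hf.integral_pos hMI hbI hM.2
  have hleft : ∫ x in a..M, f x ≤ (M - a) * f M := by
    calc ∫ x in a..M, f x ≤ ∫ _ in a..M, f M := by
          refine integral_mono_on hM.1.le (hf.intervalIntegrable haI hMI)
            intervalIntegrable_const fun x hx => ?_
          refine (hf.le_mul_exp hM ⟨hx.1, hx.2.trans hM.2.le⟩).trans ?_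
          refine mul_le_of_le_one_right (hf.pos M hM).le (exp_le_one_iff.2 ?_)
          linarith [mul_nonpos_of_nonneg_of_nonpos hψ (sub_nonpos.2 hx.2)]
      _ = (M - a) * f M := by simp
  have hhazard : (N - 1) / (M - a) ≤ f M / ∫ x in M..b, f x := by
    rw [div_le_div_iff₀ (sub_pos.2 hM.1) htail]
    linarith [integral_add_adjacent_intervals (hf.intervalIntegrable haI hMI)
      (hf.intervalIntegrable hMI hbI)]
  calc ∫ x in (M + t)..b, f x
      ≤ (∫ x in M..b, f x) * exp (-(f M / ∫ x in M..b, f x) * t) := by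
        simpa using hf.integral_right.le_mul_exp (y := M + t) hM ⟨by linarith [hM.1], htb⟩
    _ ≤ (∫ x in M..b, f x) * exp (-((N - 1) / (M - a) * t)) := by
        rw [neg_mul]; gcongr
    _ = exp (-((N - 1) / (M - a) * t)) * ∫ x in M..b, f x := mul_comm _ _

/-- Past the mode the tail decays by strong log-concavity; before it, by the monotonicity of the
hazard rate, which is large as soon as the tail carries only a small part of the mass. -/
theorem integral_right_le (hf : IsStronglyLogConcave α f ψ a b) (hM : M ∈ Ioo a b)
    (hN : N * ∫ x in M..b, f x ≤ ∫ x in a..b, f x) (ht : 0 ≤ t) (htb : M + t ≤ b)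
    (hcα : c ≤ α / 2) (hc : 0 ≤ c) (hcN : c * (b - a) ^ 2 ≤ N - 1) :
    ∫ x in (M + t)..b, f x ≤ exp (-(c * t ^ 2)) * ∫ x in M..b, f x := by
  have htail : 0 < ∫ x in M..b, f x := hf.integral_pos (Ioo_subset_Icc_self hM)
    (right_mem_Icc.2 (hM.1.trans hM.2).le) hM.2
  have hMa : 0 < M - a := sub_pos.2 hM.1
  have hα : 0 ≤ α := by linarith
  rcases le_total (ψ M) 0 with hψ | hψ
  · refine (hf.integral_right_le_of_score_nonpos hα hM hψ ht htb).trans ?_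
    gcongr
    linarith [mul_le_mul_of_nonneg_right hcα (sq_nonneg t)]
  · refine ((hf.mono hα).integral_right_le_of_score_nonneg hM hψ hN ht htb).trans ?_
    refine mul_le_mul_of_nonneg_right (exp_le_exp.2 (neg_le_neg ?_)) htail.le
    rw [div_mul_eq_mul_div, le_div_iff₀ hMa]
    calc c * t ^ 2 * (M - a) = c * (t * (M - a)) * t := by ring
      _ ≤ c * ((b - a) * (b - a)) * t := by
          gcongr <;> linarith [hM.2]
      _ = c * (b - a) ^ 2 * t := by ring
      _ ≤ (N - 1) * t := by gcongr

/-- If `F` is the distribution function of `X`, then `a + ∫ (1 - F ^ N)` is the mean of the maximum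
of `N` independent copies of `X`. The bound is exact when `F` is an exponential up to the point
where it reaches `1`, and `F` lies below such an exponential that touches it at `M`. -/
theorem mul_one_sub_le_one {F χ : ℝ → ℝ} {N : ℕ} (hF : IsStronglyLogConcave 0 F χ a b)
    (hN : N ≠ 0) (hF1 : ∀ x ∈ Icc a b, F x ≤ 1) (hFb : F b = 1) (hM : M ∈ Ioo a b)
    (hχ : 0 < χ M) (hmean : a + ∫ x in a..b, (1 - F x ^ N) ≤ M) : N * (1 - F M) ≤ 1 := by
  have hab : a < b := hM.1.trans hM.2
  have hN0 : (0 : ℝ) < N := by positivity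
  have hFM : 0 < F M := hF.pos M hM
  set r : ℝ := M - log (F M) / χ M with hr
  have hbound (x : ℝ) (hx : x ∈ Icc a b) : F x ≤ exp (χ M * (x - r)) := by
    have h := hF.le_mul_exp hM hx
    nth_rw 1 [← exp_log hFM] at h
    rwa [← exp_add, show log (F M) + (χ M * (x - M) - 0 * (x - M) ^ 2 / 2) = χ M * (x - r) by
      rw [hr]; field_simp; ring] at h
  have hMr : M ≤ r := by
    have := div_nonpos_of_nonpos_of_nonneg
      (log_nonpos hFM.le (hF1 M (Ioo_subset_Icc_self hM))) hχ.le
    linarith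
  have hrb : r ≤ b := by
    have h : 0 ≤ χ M * (b - r) := by
      simpa [hFb] using hbound b (right_mem_Icc.2 hab.le)
    linarith [nonneg_of_mul_nonneg_right h hχ]
  have hle := le_integral_one_sub_pow_of_le_exp hF.continuousOn
    (fun x hx => ⟨hF.nonneg hab hx, hF1 x hx⟩) hN hχ ⟨hM.1.le.trans hMr, hrb⟩ hbound
  have hlog : N * -log (F M) ≤ 1 := by
    have h : -log (F M) / χ M ≤ 1 / (N * χ M) := by
      rw [neg_div]
      linarith
    rw [div_le_div_iff₀ hχ (by positivity)] at h
    exact le_of_mul_le_mul_right (by linarith) hχ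
  have hlin : 1 - F M ≤ -log (F M) := by linarith [log_le_sub_one_of_pos hFM]
  exact (mul_le_mul_of_nonneg_left hlin hN0.le).trans hlog

lemma integral_one_sub_integral_pow_pos (hf : IsStronglyLogConcave α f ψ a b) (hab : a < b)
    (hmass : ∫ x in a..b, f x = 1) {N : ℕ} (hN : N ≠ 0) :
    0 < ∫ x in a..b, (1 - (∫ s in a..x, f s) ^ N) := by
  refine intervalIntegral_pos_of_pos_on
    (((continuousOn_const.sub (hf.continuousOn_integral.pow N)).mono
      (uIcc_of_le hab.le).subset).intervalIntegrable) (fun x hx => sub_pos.2 ?_) hab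
  have hx' : x ∈ Icc a b := Ioo_subset_Icc_self hx
  have hleft := hf.integral_pos (left_mem_Icc.2 hab.le) hx' hx.1
  have hright := hf.integral_pos hx' (right_mem_Icc.2 hab.le) hx.2
  have hsum := integral_add_adjacent_intervals
    (hf.intervalIntegrable (left_mem_Icc.2 hab.le) hx')
    (hf.intervalIntegrable hx' (right_mem_Icc.2 hab.le))
  exact pow_lt_one₀ hleft.le (by linarith) hN

theorem mul_integral_right_le_exp (hf : IsStronglyLogConcave α f ψ a b) (hab : a < b)
    (hmass : ∫ x in a..b, f x = 1) {N : ℕ} (hN : N ≠ 0)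
    (hmean : a + ∫ x in a..b, (1 - (∫ s in a..x, f s) ^ N) ≤ M) (ht : 0 < t) (htb : M + t ≤ b)
    (hc : 0 ≤ c) (hcα : c ≤ α / 2) (hcN : c * (b - a) ^ 2 ≤ N - 1) :
    N * ∫ x in (M + t)..b, f x ≤ exp (-(c * t ^ 2)) := by
  have hM : M ∈ Ioo a b :=
    ⟨by linarith [hf.integral_one_sub_integral_pow_pos hab hmass hN], by linarith⟩
  have hf₀ : IsStronglyLogConcave 0 f ψ a b := hf.mono (by linarith)
  have hsplit {x : ℝ} (hx : x ∈ Icc a b) : (∫ s in a..x, f s) + ∫ s in x..b, f s = 1 :=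
    hmass ▸ integral_add_adjacent_intervals (hf.intervalIntegrable (left_mem_Icc.2 hab.le) hx)
      (hf.intervalIntegrable hx (right_mem_Icc.2 hab.le))
  have hle (x : ℝ) (hx : x ∈ Icc a b) : ∫ s in a..x, f s ≤ 1 := by
    have : 0 ≤ ∫ s in x..b, f s :=
      integral_nonneg hx.2 fun s hs => hf.nonneg hab ⟨hx.1.trans hs.1, hs.2⟩
    linarith [hsplit hx]
  have hscore : 0 < f M / ∫ s in a..M, f s :=
    div_pos (hf.pos M hM) (hf₀.integral_left.pos M hM)
  have htail : N * ∫ x in M..b, f x ≤ 1 := by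
    rw [eq_sub_of_add_eq' (hsplit (Ioo_subset_Icc_self hM))]
    exact hf₀.integral_left.mul_one_sub_le_one hN hle hmass hM hscore hmean
  have hdecay := hf.integral_right_le hM (htail.trans_eq hmass.symm) ht.le htb hcα hc hcN
  calc N * ∫ x in (M + t)..b, f x
      ≤ N * (exp (-(c * t ^ 2)) * ∫ x in M..b, f x) := by gcongr
    _ = exp (-(c * t ^ 2)) * (N * ∫ x in M..b, f x) := by ring
    _ ≤ exp (-(c * t ^ 2)) := mul_le_of_le_one_right (exp_pos _).le htail

end IsStronglyLogConcave

section SqrtBeta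

variable {a b r x : ℝ}

/-- The density of the square root of a `Beta(a, b)` variable on `[0, 1]`; the formula is not cut
off outside this interval, where it has no meaning. -/
def sqrtBetaPDF (a b x : ℝ) : ℝ :=
  2 / beta a b * (x ^ (2 * a - 1) * (1 - x ^ 2) ^ (b - 1))

lemma hasDerivAt_sqrtBetaPDF (hx : x ∈ Ioo 0 1) :
    HasDerivAt (sqrtBetaPDF a b)
      (sqrtBetaPDF a b x * ((2 * a - 1) / x - 2 * (b - 1) * (x / (1 - x ^ 2)))) x := by
  have hx1 : 0 < 1 - x ^ 2 := by nlinarith [hx.1, hx.2]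
  have h₁ := hasDerivAt_rpow_const (p := 2 * a - 1) (Or.inl hx.1.ne')
  have h₂ := ((hasDerivAt_pow 2 x).const_sub 1).rpow_const (p := b - 1) (Or.inl hx1.ne')
  refine ((h₁.mul h₂).const_mul (2 / beta a b)).congr_deriv ?_
  have hx0 : x ≠ 0 := hx.1.ne'
  rw [rpow_sub_one hx0 (2 * a - 1), rpow_sub_one hx1.ne' (b - 1), sqrtBetaPDF]
  simp only [Nat.cast_ofNat]
  field_simp
  ring

theorem isStronglyLogConcave_sqrtBetaPDF (ha : 1 / 2 ≤ a) (hb : 1 ≤ b) :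
    IsStronglyLogConcave (2 * a + 2 * b - 3) (sqrtBetaPDF a b)
      (fun x => (2 * a - 1) / x - 2 * (b - 1) * (x / (1 - x ^ 2))) 0 1 where
  continuousOn := by
    refine (continuous_const.mul (.mul ?_ ?_)).continuousOn
    · exact continuous_id.rpow_const fun _ => Or.inr (by linarith)
    · exact Continuous.rpow_const (by fun_prop) fun _ => Or.inr (by linarith)
  pos x hx := by
    have hx1 : 0 < 1 - x ^ 2 := by nlinarith [hx.1, hx.2]
    exact mul_pos (div_pos two_pos (beta_pos (by linarith) (by linarith)))
      (mul_pos (rpow_pos_of_pos hx.1 _) (rpow_pos_of_pos hx1 _))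
  hasDerivAt x hx := hasDerivAt_sqrtBetaPDF hx
  score_le x hx y hy hxy := by
    have hx0 := hx.1
    have hy0 := hy.1
    have hx1 : 0 < 1 - x ^ 2 := by nlinarith [hx.2]
    have hy1 : 0 < 1 - y ^ 2 := by nlinarith [hy.2]
    have hinv : y - x ≤ 1 / x - 1 / y := by
      rw [div_sub_div _ _ hx0.ne' hy0.ne', le_div_iff₀ (mul_pos hx0 hy0)]
      have : x * y ≤ 1 := mul_le_one₀ hx.2.le hy0.le hy.2.le
      linarith [mul_le_mul_of_nonneg_left this (sub_nonneg.2 hxy)]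
    have hfrac : y - x ≤ y / (1 - y ^ 2) - x / (1 - x ^ 2) := by
      rw [div_sub_div _ _ hy1.ne' hx1.ne', le_div_iff₀ (mul_pos hy1 hx1)]
      have : (1 - y ^ 2) * (1 - x ^ 2) ≤ 1 + x * y := by
        linarith [mul_pos hx0 hy0, mul_le_one₀ (by nlinarith) hx1.le
          (by nlinarith : 1 - x ^ 2 ≤ 1) (a := 1 - y ^ 2)]
      linarith [mul_le_mul_of_nonneg_left this (sub_nonneg.2 hxy)]
    have h₁ := mul_le_mul_of_nonneg_left hinv (by linarith : 0 ≤ 2 * a - 1)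
    have h₂ := mul_le_mul_of_nonneg_left hfrac (by linarith : 0 ≤ 2 * (b - 1))
    simp only [div_eq_mul_inv (2 * a - 1), one_div] at h₁ ⊢
    linarith

lemma image_sq_Ioo (hr : 0 ≤ r) : (fun x : ℝ => x ^ 2) '' Ioo r 1 = Ioo (r ^ 2) 1 := by
  ext y
  constructor
  · rintro ⟨x, hx, rfl⟩
    exact ⟨pow_lt_pow_left₀ hx.1 hr two_ne_zero, pow_lt_one₀ (hr.trans hx.1.le) hx.2 two_ne_zero⟩
  · intro hy
    have hy0 : 0 ≤ y := (sq_nonneg r).trans hy.1.le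
    exact ⟨√y, ⟨lt_sqrt_of_sq_lt hy.1, (sqrt_lt' one_pos).2 (by simpa using hy.2)⟩, sq_sqrt hy0⟩

lemma two_mul_mul_betaPDFReal_sq (hx : x ∈ Ioo 0 1) :
    2 * x * betaPDFReal a b (x ^ 2) = sqrtBetaPDF a b x := by
  have hx2 : 0 < x ^ 2 ∧ x ^ 2 < 1 := ⟨pow_pos hx.1 2, pow_lt_one₀ hx.1.le hx.2 two_ne_zero⟩
  have hpow : x ^ (2 * a - 1) = x * (x ^ 2) ^ (a - 1) := by
    rw [← rpow_natCast x 2, ← rpow_mul hx.1.le, mul_comm x, ← rpow_add_one hx.1.ne']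
    congr 1
    push_cast
    ring
  rw [betaPDFReal, if_pos hx2, sqrtBetaPDF, hpow]
  ring

lemma betaMeasure_Ici_sq (ha : 1 / 2 ≤ a) (hb : 1 ≤ b) (hr : r ∈ Icc 0 1) :
    betaMeasure a b (Ici (r ^ 2)) = ENNReal.ofReal (∫ x in r..1, sqrtBetaPDF a b x) := by
  have hφ := isStronglyLogConcave_sqrtBetaPDF ha hb
  have hmono : MonotoneOn (fun x : ℝ => x ^ 2) (Ioo r 1) := fun x hx y _ hxy =>
    pow_le_pow_left₀ (hr.1.trans hx.1.le) hxy 2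
  have hint := hφ.intervalIntegrable hr (right_mem_Icc.2 zero_le_one)
  calc betaMeasure a b (Ici (r ^ 2)) = ∫⁻ y in Ici (r ^ 2), betaPDF a b y :=
        withDensity_apply _ measurableSet_Ici
    _ = ∫⁻ y in Ioo (r ^ 2) 1, betaPDF a b y := by
        rw [← Ico_union_Ici_eq_Ici (pow_le_one₀ hr.1 hr.2), lintegral_union measurableSet_Ici
          ((Iio_disjoint_Ici le_rfl).mono_left Ico_subset_Iio_self), setLIntegral_eq_zero
          measurableSet_Ici fun _ => betaPDF_eq_zero_of_one_le, add_zero,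
          setLIntegral_congr Ioo_ae_eq_Ico]
    _ = ∫⁻ x in Ioo r 1, ENNReal.ofReal (2 * x) * betaPDF a b (x ^ 2) := by
        rw [← image_sq_Ioo hr.1]
        exact lintegral_image_eq_lintegral_deriv_mul_of_monotoneOn measurableSet_Ioo
          (fun x _ => by simpa using (hasDerivAt_pow 2 x).hasDerivWithinAt) hmono _
    _ = ∫⁻ x in Ioo r 1, ENNReal.ofReal (sqrtBetaPDF a b x) := by
        refine setLIntegral_congr_fun measurableSet_Ioo fun x hx => ?_
        have hx0 : 0 < x := hr.1.trans_lt hx.1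
        rw [betaPDF, ← ENNReal.ofReal_mul (by positivity), two_mul_mul_betaPDFReal_sq ⟨hx0, hx.2⟩]
    _ = ENNReal.ofReal (∫ x in r..1, sqrtBetaPDF a b x) := by
        rw [integral_of_le hr.2, ofReal_integral_eq_lintegral_ofReal hint.1,
          setLIntegral_congr Ioo_ae_eq_Ioc]
        exact ae_restrict_of_forall_mem measurableSet_Ioc fun x hx =>
          hφ.nonneg one_pos ⟨hr.1.trans hx.1.le, hx.2⟩

lemma integral_sqrtBetaPDF (ha : 1 / 2 ≤ a) (hb : 1 ≤ b) :
    ∫ x in (0 : ℝ)..1, sqrtBetaPDF a b x = 1 := by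
  have := isProbabilityMeasureBeta (α := a) (β := b) (by linarith) (by linarith)
  have hnull : betaMeasure a b (Iio (0 ^ 2)) = 0 := by
    rw [betaMeasure, withDensity_apply _ measurableSet_Iio]
    exact setLIntegral_eq_zero measurableSet_Iio fun y hy =>
      betaPDF_eq_zero_of_nonpos (hy.le.trans_eq (zero_pow two_ne_zero))
  have h := betaMeasure_Ici_sq ha hb (left_mem_Icc.2 zero_le_one)
  rw [← compl_Iio, prob_compl_eq_one_sub measurableSet_Iio, hnull, tsub_zero] at h
  exact (ENNReal.ofReal_eq_one.1 h.symm)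

lemma cdf_betaMeasure_sq (ha : 1 / 2 ≤ a) (hb : 1 ≤ b) (hr : r ∈ Icc 0 1) :
    cdf (betaMeasure a b) (r ^ 2) = ∫ x in (0 : ℝ)..r, sqrtBetaPDF a b x := by
  have := isProbabilityMeasureBeta (α := a) (β := b) (by linarith) (by linarith)
  have hφ := isStronglyLogConcave_sqrtBetaPDF ha hb
  have htail : (betaMeasure a b).real (Ici (r ^ 2)) = ∫ x in r..1, sqrtBetaPDF a b x := by
    rw [measureReal_def, betaMeasure_Ici_sq ha hb hr, ENNReal.toReal_ofReal]
    exact integral_nonneg hr.2 fun x hx => hφ.nonneg one_pos ⟨hr.1.trans hx.1, hx.2⟩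
  have hsum := integral_add_adjacent_intervals
    (hφ.intervalIntegrable (left_mem_Icc.2 zero_le_one) hr)
    (hφ.intervalIntegrable hr (right_mem_Icc.2 zero_le_one))
  have hIio : Iio (r ^ 2) =ᵐ[betaMeasure a b] Iic (r ^ 2) :=
    (withDensity_absolutelyContinuous _ _).ae_eq Iio_ae_eq_Iic
  rw [integral_sqrtBetaPDF ha hb, ← htail, ← compl_Iio, probReal_compl_eq_one_sub
    measurableSet_Iio, measureReal_congr hIio, ← cdf_eq_real] at hsum
  linarith

end SqrtBeta

section BetaGamma

variable {a b r w x : ℝ}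

lemma gammaPDFReal_mul_betaPDFReal (ha : 0 < a) (hb : 0 < b) (hr : 0 < r) (hx : x ∈ Ioo 0 w) :
    gammaPDFReal (a + b) r w * betaPDFReal a b (x / w) =
      w * (gammaPDFReal a r x * gammaPDFReal b r (w - x)) := by
  have hw : 0 < w := hx.1.trans hx.2
  have hwx : 0 < w - x := sub_pos.2 hx.2
  have hpow : w ^ (a + b - 1) = w * (w ^ (a - 1) * w ^ (b - 1)) := by
    rw [← rpow_add hw, mul_comm, ← rpow_add_one hw.ne']
    congr 1
    ring
  have hexp : exp (-(r * w)) = exp (-(r * x)) * exp (-(r * (w - x))) := by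
    rw [← exp_add]
    congr 1
    ring
  have hone : 1 - x / w = (w - x) / w := by field_simp
  rw [gammaPDFReal, gammaPDFReal, gammaPDFReal, betaPDFReal, if_pos hw.le, if_pos hx.1.le,
    if_pos hwx.le, if_pos ⟨div_pos hx.1 hw, (div_lt_one hw).2 hx.2⟩, hone, div_rpow hx.1.le hw.le,
    div_rpow hwx.le hw.le, hpow, hexp, rpow_add hr, beta]
  field_simp

lemma gammaPDF_mul_betaPDF (ha : 0 < a) (hb : 0 < b) (hr : 0 < r) (hw : 0 < w) (hx0 : x ≠ 0)
    (hxw : x ≠ w) :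
    gammaPDF (a + b) r w * betaPDF a b (x / w) =
      ENNReal.ofReal w * (gammaPDF a r x * gammaPDF b r (w - x)) := by
  rcases hx0.lt_or_gt with hx | hx
  · rw [gammaPDF_of_neg hx, betaPDF_eq_zero_of_nonpos (div_nonpos_of_nonpos_of_nonneg hx.le hw.le)]
    simp only [mul_zero, zero_mul]
  rcases hxw.lt_or_gt with hxw | hxw
  · rw [gammaPDF, gammaPDF, gammaPDF, betaPDF,
      ← ENNReal.ofReal_mul (gammaPDFReal_nonneg (add_pos ha hb) hr _),
      ← ENNReal.ofReal_mul (gammaPDFReal_nonneg ha hr _), ← ENNReal.ofReal_mul hw.le,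
      gammaPDFReal_mul_betaPDFReal ha hb hr ⟨hx, hxw⟩]
  · rw [gammaPDF_of_neg (sub_neg.2 hxw), betaPDF_eq_zero_of_one_le ((one_le_div hw).2 hxw.le)]
    simp only [mul_zero]

@[fun_prop]
lemma measurable_gammaPDF (a r : ℝ) : Measurable (gammaPDF a r) :=
  (measurable_gammaPDFReal a r).ennreal_ofReal

@[fun_prop]
lemma measurable_betaPDF (a b : ℝ) : Measurable (betaPDF a b) :=
  (measurable_betaPDFReal a b).ennreal_ofReal

lemma lintegral_gammaMeasure {f : ℝ → ℝ≥0∞} (hf : Measurable f) :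
    ∫⁻ x, f x ∂gammaMeasure a r = ∫⁻ x, gammaPDF a r x * f x :=
  lintegral_withDensity_eq_lintegral_mul _ (measurable_gammaPDF a r) hf

lemma lintegral_betaMeasure {f : ℝ → ℝ≥0∞} (hf : Measurable f) :
    ∫⁻ x, f x ∂betaMeasure a b = ∫⁻ x, betaPDF a b x * f x :=
  lintegral_withDensity_eq_lintegral_mul _ (measurable_betaPDF a b) hf

lemma gammaPDF_mul_lintegral_betaPDF (ha : 0 < a) (hb : 0 < b) (hr : 0 < r) (hw : w ≠ 0)
    {f : ℝ → ℝ≥0∞} (hf : Measurable f) :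
    gammaPDF (a + b) r w * ∫⁻ u, betaPDF a b u * f (u * w) =
      ∫⁻ x, gammaPDF a r x * gammaPDF b r (w - x) * f x := by
  rcases hw.lt_or_gt with hw | hw
  · have hzero (x : ℝ) : gammaPDF a r x * gammaPDF b r (w - x) * f x = 0 := by
      rcases lt_or_ge x 0 with hx | hx
      · rw [gammaPDF_of_neg hx, zero_mul, zero_mul]
      · rw [gammaPDF_of_neg (sub_neg.2 (hw.trans_le hx)), mul_zero, zero_mul]
    simp only [gammaPDF_of_neg hw, zero_mul, hzero, lintegral_zero]
  have hscale : ∫⁻ u, betaPDF a b u * f (u * w) =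
      ENNReal.ofReal w⁻¹ * ∫⁻ x, betaPDF a b (x / w) * f x := by
    have h := lintegral_map (μ := volume) (f := fun x => betaPDF a b (x / w) * f x)
      (by fun_prop) (measurable_mul_const w)
    rw [Real.map_volume_mul_right hw.ne', lintegral_smul_measure,
      abs_of_pos (inv_pos.2 hw), smul_eq_mul] at h
    simp only [h, mul_div_cancel_right₀ _ hw.ne']
  rw [hscale, ← mul_assoc, mul_comm (gammaPDF (a + b) r w), mul_assoc,
    ← lintegral_const_mul _ (by fun_prop), ← lintegral_const_mul _ (by fun_prop)]
  refine lintegral_congr_ae ?_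
  filter_upwards [volume.ae_ne 0, volume.ae_ne w] with x hx0 hxw
  rw [← mul_assoc (gammaPDF _ _ _), gammaPDF_mul_betaPDF ha hb hr hw hx0 hxw, mul_assoc,
    ← mul_assoc, ← ENNReal.ofReal_mul (inv_pos.2 hw).le, inv_mul_cancel₀ hw.ne',
    ENNReal.ofReal_one, one_mul]

theorem map_betaMeasure_prod_gammaMeasure (ha : 0 < a) (hb : 0 < b) (hr : 0 < r) :
    ((betaMeasure a b).prod (gammaMeasure (a + b) r)).map
      (fun p => (p.1 * p.2, (1 - p.1) * p.2)) = (gammaMeasure a r).prod (gammaMeasure b r) := by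
  have := isProbabilityMeasureBeta ha hb
  have := isProbabilityMeasure_gammaMeasure hb hr
  have := isProbabilityMeasure_gammaMeasure (add_pos ha hb) hr
  refine Measure.ext_of_lintegral _ fun f hf => ?_
  calc ∫⁻ z, f z ∂((betaMeasure a b).prod (gammaMeasure (a + b) r)).map
        (fun p => (p.1 * p.2, (1 - p.1) * p.2))
      = ∫⁻ w, gammaPDF (a + b) r w * ∫⁻ u, betaPDF a b u * f (u * w, w - u * w) := by
        have hf' : Measurable fun p : ℝ × ℝ => f (p.1 * p.2, (1 - p.1) * p.2) := by fun_prop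
        rw [lintegral_map hf (by fun_prop), lintegral_prod_symm' _ hf',
          lintegral_gammaMeasure hf'.lintegral_prod_left']
        refine lintegral_congr fun w => ?_
        rw [lintegral_betaMeasure (by fun_prop)]
        simp only [one_sub_mul]
    _ = ∫⁻ w, ∫⁻ x, gammaPDF a r x * gammaPDF b r (w - x) * f (x, w - x) := by
        refine lintegral_congr_ae ?_
        filter_upwards [volume.ae_ne 0] with w hw
        exact gammaPDF_mul_lintegral_betaPDF ha hb hr hw (f := fun x => f (x, w - x))
          (by fun_prop)
    _ = ∫⁻ x, ∫⁻ y, gammaPDF a r x * gammaPDF b r y * f (x, y) := by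
        rw [lintegral_lintegral_swap (by fun_prop)]
        refine lintegral_congr fun x => ?_
        exact lintegral_sub_right_eq_self (fun y => gammaPDF a r x * gammaPDF b r y * f (x, y)) x
    _ = ∫⁻ z, f z ∂(gammaMeasure a r).prod (gammaMeasure b r) := by
        rw [lintegral_prod _ hf.aemeasurable, lintegral_gammaMeasure hf.lintegral_prod_right']
        refine lintegral_congr fun x => ?_
        rw [lintegral_gammaMeasure (by fun_prop), ← lintegral_const_mul _ (by fun_prop)]
        simp only [mul_assoc]

lemma ae_pos_gammaMeasure (a r : ℝ) : ∀ᵐ w ∂gammaMeasure a r, 0 < w := by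
  have hset : {w : ℝ | 0 < w}ᶜ = Iic 0 := compl_Ioi
  rw [ae_iff, ← compl_ofPred, hset, gammaMeasure, withDensity_apply _ measurableSet_Iic,
    ← setLIntegral_congr Iio_ae_eq_Iic]
  exact lintegral_gammaPDF_of_nonpos le_rfl

lemma map_mul_betaMeasure_prod_gammaMeasure (ha : 0 < a) (hb : 0 < b) (hr : 0 < r) :
    ((betaMeasure a b).prod (gammaMeasure (a + b) r)).map (fun p => p.1 * p.2) =
      gammaMeasure a r := by
  have := isProbabilityMeasure_gammaMeasure hb hr
  rw [← Measure.fst_prod (μ := gammaMeasure a r) (ν := gammaMeasure b r),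
    ← map_betaMeasure_prod_gammaMeasure ha hb hr, Measure.fst, Measure.map_map (by fun_prop)
    (by fun_prop)]
  rfl

lemma map_add_gammaMeasure_prod_gammaMeasure (ha : 0 < a) (hb : 0 < b) (hr : 0 < r) :
    ((gammaMeasure a r).prod (gammaMeasure b r)).map (fun p => p.1 + p.2) =
      gammaMeasure (a + b) r := by
  have := isProbabilityMeasureBeta ha hb
  have := isProbabilityMeasure_gammaMeasure (add_pos ha hb) hr
  rw [← map_betaMeasure_prod_gammaMeasure ha hb hr, Measure.map_map (by fun_prop) (by fun_prop)]
  have hsum : (fun p : ℝ × ℝ => p.1 + p.2) ∘ (fun p => (p.1 * p.2, (1 - p.1) * p.2)) =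
      Prod.snd := by
    ext p
    simp only [Function.comp_apply]
    ring
  rw [hsum, ← Measure.snd, Measure.snd_prod]

lemma map_div_add_gammaMeasure_prod_gammaMeasure (ha : 0 < a) (hb : 0 < b) (hr : 0 < r) :
    ((gammaMeasure a r).prod (gammaMeasure b r)).map (fun p => p.1 / (p.1 + p.2)) =
      betaMeasure a b := by
  have := isProbabilityMeasure_gammaMeasure (add_pos ha hb) hr
  have hpos : ∀ᵐ p ∂(betaMeasure a b).prod (gammaMeasure (a + b) r), 0 < p.2 :=
    Measure.quasiMeasurePreserving_snd.ae (ae_pos_gammaMeasure (a + b) r)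
  rw [← map_betaMeasure_prod_gammaMeasure ha hb hr, Measure.map_map (by fun_prop) (by fun_prop)]
  calc _ = ((betaMeasure a b).prod (gammaMeasure (a + b) r)).map Prod.fst := by
        refine Measure.map_congr ?_
        filter_upwards [hpos] with p hp
        simp only [Function.comp_apply, ← add_mul, add_sub_cancel, one_mul,
          mul_div_cancel_right₀ _ hp.ne']
    _ = betaMeasure a b := by rw [← Measure.fst, Measure.fst_prod]

end BetaGamma

section ChiSquare

open scoped NNReal

lemma lintegral_eq_two_mul_setLIntegral_Ioi {f : ℝ → ℝ≥0∞} (hf : ∀ x, f (-x) = f x) :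
    ∫⁻ x, f x = 2 * ∫⁻ x in Ioi 0, f x := by
  have hneg : ∫⁻ x in Iio 0, f x = ∫⁻ x in Ioi 0, f x := by
    rw [← (Measure.measurePreserving_neg volume).setLIntegral_comp_preimage_emb
      (MeasurableEquiv.neg ℝ).measurableEmbedding f (Iio 0)]
    simp only [neg_preimage, neg_Iio, neg_zero, hf]
  rw [← lintegral_add_compl f measurableSet_Ioi, compl_Ioi, ← setLIntegral_congr Iio_ae_eq_Iic,
    hneg, two_mul]

lemma image_sq_Ioi : (fun x : ℝ => x ^ 2) '' Ioi 0 = Ioi 0 := by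
  refine Subset.antisymm ?_ fun y hy => ⟨√y, sqrt_pos.2 hy, sq_sqrt (le_of_lt hy)⟩
  rintro _ ⟨x, hx, rfl⟩
  exact pow_pos (mem_Ioi.1 hx) 2

lemma two_mul_gaussianPDF {v : ℝ≥0} {x : ℝ} (hx : 0 < x) :
    2 * gaussianPDF 0 v x = ENNReal.ofReal (2 * x) * gammaPDF (1 / 2) (2 * v)⁻¹ (x ^ 2) := by
  have hpow : (x ^ 2) ^ ((1 : ℝ) / 2 - 1) = x⁻¹ := by
    rw [← rpow_natCast_mul hx.le, ← rpow_neg_one]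
    norm_num
  have hexp : -(x - 0) ^ 2 / (2 * v) = -((2 * v : ℝ)⁻¹ * x ^ 2) := by
    field_simp
    ring
  have hsqrt : √(2 * π * v) = √(2 * v) * √π := by
    rw [← sqrt_mul (by positivity)]
    ring_nf
  rw [gaussianPDF, gammaPDF_of_nonneg (sq_nonneg x), ← ENNReal.ofReal_mul (by positivity),
    ← ENNReal.ofReal_ofNat, ← ENNReal.ofReal_mul zero_le_two, gaussianPDFReal, hpow, hexp, hsqrt,
    ← sqrt_eq_rpow, Gamma_one_half_eq, sqrt_inv]
  field_simp

lemma map_sq_gaussianReal {v : ℝ≥0} (hv : v ≠ 0) :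
    (gaussianReal 0 v).map (fun x => x ^ 2) = gammaMeasure (1 / 2) (2 * v)⁻¹ := by
  refine Measure.ext_of_lintegral _ fun f hf => ?_
  have hpdf : ∀ x, gaussianPDF 0 v (-x) = gaussianPDF 0 v x := fun x => by
    simp only [gaussianPDF, gaussianPDFReal, sub_zero, neg_sq]
  have hsupp : ∫⁻ y in Iic 0, gammaPDF (1 / 2) (2 * v : ℝ)⁻¹ y * f y = 0 := by
    rw [← setLIntegral_congr Iio_ae_eq_Iic]
    refine setLIntegral_eq_zero measurableSet_Iio fun y hy => ?_
    simp only [gammaPDF_of_neg hy, zero_mul, Pi.zero_apply]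
  calc ∫⁻ y, f y ∂(gaussianReal 0 v).map (fun x => x ^ 2)
      = ∫⁻ x, gaussianPDF 0 v x * f (x ^ 2) := by
        rw [lintegral_map hf (by fun_prop), gaussianReal_of_var_ne_zero _ hv,
          lintegral_withDensity_eq_lintegral_mul _ (measurable_gaussianPDF 0 v) (by fun_prop)]
        rfl
    _ = ∫⁻ x in Ioi 0, 2 * gaussianPDF 0 v x * f (x ^ 2) := by
        rw [lintegral_eq_two_mul_setLIntegral_Ioi fun x => by rw [hpdf, neg_sq],
          ← lintegral_const_mul' _ _ ENNReal.ofNat_ne_top]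
        simp only [mul_assoc]
    _ = ∫⁻ x in Ioi 0, ENNReal.ofReal (2 * x) *
          (gammaPDF (1 / 2) (2 * v)⁻¹ (x ^ 2) * f (x ^ 2)) := by
        refine setLIntegral_congr_fun measurableSet_Ioi fun x hx => ?_
        rw [two_mul_gaussianPDF hx, mul_assoc]
    _ = ∫⁻ y in Ioi 0, gammaPDF (1 / 2) (2 * v)⁻¹ y * f y := by
        rw [← lintegral_image_eq_lintegral_deriv_mul_of_monotoneOn measurableSet_Ioi
          (fun x _ => by simpa using (hasDerivAt_pow 2 x).hasDerivWithinAt)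
          (fun x hx y _ hxy => pow_le_pow_left₀ (le_of_lt hx) hxy 2)
          (fun y => gammaPDF (1 / 2) (2 * v)⁻¹ y * f y), image_sq_Ioi]
    _ = ∫⁻ y, f y ∂gammaMeasure (1 / 2) (2 * v)⁻¹ := by
        rw [lintegral_gammaMeasure hf, ← lintegral_add_compl (μ := volume) _ measurableSet_Ioi,
          compl_Ioi, hsupp, add_zero]

end ChiSquare

section IndependentGamma

variable {Ω ι : Type*} [MeasurableSpace Ω] {P : Measure Ω} {X : ι → Ω → ℝ} {a : ι → ℝ} {r : ℝ}

lemma map_sum_eq_gammaMeasure (hX : iIndepFun X P) (hXm : ∀ i, Measurable (X i))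
    (hlaw : ∀ i, P.map (X i) = gammaMeasure (a i) r) (ha : ∀ i, 0 < a i) (hr : 0 < r)
    {s : Finset ι} (hs : s.Nonempty) :
    P.map (fun ω => ∑ i ∈ s, X i ω) = gammaMeasure (∑ i ∈ s, a i) r := by
  have := hX.isProbabilityMeasure
  induction hs using Finset.Nonempty.cons_induction with
  | singleton i => simp only [Finset.sum_singleton, hlaw]
  | cons i s hi hs ih =>
    have hindep := (hX.indepFun_finsetSum_of_notMem hXm hi).symm
    rw [Finset.sum_fn, indepFun_iff_map_prod_eq_prod_map_map (hXm i).aemeasurable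
      (Finset.measurable_sum s fun j _ => hXm j).aemeasurable, hlaw, ih] at hindep
    simp only [Finset.sum_cons]
    rw [← map_add_gammaMeasure_prod_gammaMeasure (ha i) (Finset.sum_pos (fun j _ => ha j) hs) hr,
      ← hindep, Measure.map_map (by fun_prop)
      ((hXm i).prodMk (Finset.measurable_sum s fun j _ => hXm j))]
    rfl

lemma map_sum_div_sum_eq_betaMeasure (hX : iIndepFun X P) (hXm : ∀ i, Measurable (X i))
    (hlaw : ∀ i, P.map (X i) = gammaMeasure (a i) r) (ha : ∀ i, 0 < a i) (hr : 0 < r)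
    {s t : Finset ι} (hst : Disjoint s t) (hs : s.Nonempty) (ht : t.Nonempty) :
    P.map (fun ω => (∑ i ∈ s, X i ω) / (∑ i ∈ s, X i ω + ∑ i ∈ t, X i ω)) =
      betaMeasure (∑ i ∈ s, a i) (∑ i ∈ t, a i) := by
  have := hX.isProbabilityMeasure
  have hmeas (u : Finset ι) : Measurable fun ω => ∑ i ∈ u, X i ω :=
    Finset.measurable_sum u fun j _ => hXm j
  have hindep : IndepFun (fun ω => ∑ i ∈ s, X i ω) (fun ω => ∑ i ∈ t, X i ω) P := by
    have h := (hX.indepFun_finset s t hst hXm).comp (φ := fun x => ∑ i, x i)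
      (ψ := fun x => ∑ i, x i) (by fun_prop) (by fun_prop)
    convert h using 1 <;> ext ω <;>
      simp only [Function.comp_apply, Finset.univ_eq_attach,
        Finset.sum_attach _ fun i => X i ω]
  rw [indepFun_iff_map_prod_eq_prod_map_map (hmeas s).aemeasurable (hmeas t).aemeasurable,
    map_sum_eq_gammaMeasure hX hXm hlaw ha hr hs, map_sum_eq_gammaMeasure hX hXm hlaw ha hr ht]
    at hindep
  rw [← map_div_add_gammaMeasure_prod_gammaMeasure (Finset.sum_pos (fun j _ => ha j) hs)
    (Finset.sum_pos (fun j _ => ha j) ht) hr, ← hindep, Measure.map_map (by fun_prop)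
    ((hmeas s).prodMk (hmeas t))]
  rfl

end IndependentGamma

section StandardGaussian

variable {E κ κ' : Type*} [NormedAddCommGroup E] [InnerProductSpace ℝ E] [FiniteDimensional ℝ E]
  [Fintype κ] [Fintype κ']

lemma exists_orthonormalBasis_sum_extension {v : κ → E} (hv : Orthonormal ℝ v)
    (hcard : Module.finrank ℝ E = Fintype.card κ + Fintype.card κ') :
    ∃ b : OrthonormalBasis (κ ⊕ κ') ℝ E, ∀ k, b (.inl k) = v k := by
  have hrange : Orthonormal ℝ ((range Sum.inl).domRestrict (Sum.elim v (0 : κ' → E))) := by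
    convert hv.comp _ (Equiv.ofInjective _ (Sum.inl_injective (α := κ) (β := κ'))).symm.injective
    ext ⟨_, k, rfl⟩
    exact congrArg v (Equiv.ofInjective_symm_apply Sum.inl_injective k).symm
  obtain ⟨b, hb⟩ := hrange.exists_orthonormalBasis_extension_of_card_eq
    (by rw [hcard, Fintype.card_sum])
  exact ⟨b, fun k => hb _ (mem_range_self k)⟩

variable [MeasurableSpace E] [BorelSpace E]

lemma stdGaussian_singleton [Nontrivial E] (x : E) : stdGaussian E {x} = 0 := by
  set b := stdOrthonormalBasis ℝ E
  have : Nonempty (Fin (Module.finrank ℝ E)) := ⟨⟨0, Module.finrank_pos⟩⟩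
  have := nullSingletonClass_gaussianReal (μ := 0) one_ne_zero
  have hinj : Function.Injective fun y : Fin (Module.finrank ℝ E) → ℝ => ∑ i, y i • b i :=
    linearIndependent_iff_injective_fintypeLinearCombination.1 b.orthonormal.linearIndependent
  rw [stdGaussian, Measure.map_apply (by fun_prop) (measurableSet_singleton x)]
  exact (subsingleton_singleton.preimage hinj).measure_zero _

variable [Nonempty κ] [Nonempty κ']

lemma map_sum_inner_sq_div_norm_sq_stdGaussian (b : OrthonormalBasis (κ ⊕ κ') ℝ E) :
    (stdGaussian E).map (fun x => (∑ k, ⟪b (.inl k), x⟫ ^ 2) / ‖x‖ ^ 2) =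
      betaMeasure (Fintype.card κ / 2) (Fintype.card κ' / 2) := by
  have hbasis : Measurable fun y : κ ⊕ κ' → ℝ => ∑ i, y i • b i := by fun_prop
  have hindep : iIndepFun (fun i (y : κ ⊕ κ' → ℝ) => y i ^ 2)
      (Measure.pi fun _ => gaussianReal 0 1) :=
    iIndepFun_pi (X := fun _ x => x ^ 2) fun _ => by fun_prop
  have hlaw (i : κ ⊕ κ') : (Measure.pi fun _ => gaussianReal 0 1).map (fun y => y i ^ 2) =
      gammaMeasure (1 / 2) (2 * (1 : NNReal))⁻¹ := by
    rw [← map_sq_gaussianReal one_ne_zero]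
    exact ((measurable_id.pow_const 2).measurePreserving _).comp
      (measurePreserving_eval (fun _ => gaussianReal 0 1) i) |>.map_eq
  have hdisj : Disjoint (Finset.univ.map (Function.Embedding.inl : κ ↪ κ ⊕ κ'))
      (Finset.univ.map Function.Embedding.inr) :=
    Finset.disjoint_map_inl_map_inr _ _
  have h := map_sum_div_sum_eq_betaMeasure hindep (fun i => by fun_prop) hlaw
    (fun _ => one_half_pos) (by positivity) hdisj (Finset.univ_nonempty.map)
    (Finset.univ_nonempty.map)
  simp only [Finset.sum_map, Function.Embedding.inl_apply, Function.Embedding.inr_apply,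
    Finset.sum_const, Finset.card_map, Finset.card_univ, nsmul_eq_mul, mul_one_div] at h
  rw [stdGaussian_eq_map_pi_orthonormalBasis b, Measure.map_map (by fun_prop) hbasis, ← h]
  congr with y
  simp only [Function.comp_apply, ← b.sum_sq_inner_right, b.orthonormal.inner_right_fintype]
  rw [Fintype.sum_sum_type]

end StandardGaussian

lemma map_prod_eq_of_ae_map_eq {α β γ : Type*} [MeasurableSpace α] [MeasurableSpace β]
    [MeasurableSpace γ] {μ : Measure α} [IsProbabilityMeasure μ] {ν : Measure β} [SFinite ν]
    {ρ : Measure γ} {f : α × β → γ} (hf : Measurable f)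
    (h : ∀ᵐ x ∂μ, ν.map (fun y => f (x, y)) = ρ) : (μ.prod ν).map f = ρ := by
  ext s hs
  have hfiber : ∀ᵐ x ∂μ, ν (Prod.mk x ⁻¹' (f ⁻¹' s)) = ρ s := by
    filter_upwards [h] with x hx
    rw [← hx, Measure.map_apply (by fun_prop) hs]
    rfl
  rw [Measure.map_apply hf hs, Measure.prod_apply (hf hs), lintegral_congr_ae hfiber,
    lintegral_const, measure_univ, mul_one]

lemma measure_le_ciSup_le {Ω ι : Type*} [MeasurableSpace Ω] [Fintype ι] [Nonempty ι]
    (μ : Measure Ω) (X : ι → Ω → ℝ) (s : ℝ) :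
    μ {ω | s ≤ ⨆ i, X i ω} ≤ ∑ i, μ {ω | s ≤ X i ω} := by
  refine (measure_mono fun ω hω => ?_).trans (measure_iUnion_fintype_le μ _)
  obtain ⟨i, hi⟩ := exists_eq_ciSup_of_finite (f := fun i => X i ω)
  exact mem_iUnion.2 ⟨i, (mem_ofPred.1 hω).trans_eq hi.symm⟩

section OrthonormalColumns

variable {m n : Type*}

lemma measurable_matrix_apply (i : n) (j : m) : Measurable fun U : Matrix n m ℝ => U i j :=
  (measurable_pi_apply j).comp (measurable_pi_apply i)

variable [Fintype n]

lemma measurable_matrix_mul (Q : Matrix n n ℝ) : Measurable fun U : Matrix n m ℝ => Q * U := by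
  refine measurable_pi_lambda _ fun i => measurable_pi_lambda _ fun j => ?_
  simp only [Matrix.mul_apply]
  exact Finset.measurable_sum _ fun c _ => (measurable_matrix_apply c j).const_mul _

lemma measurableSet_transpose_mul_self_eq_one [Countable m] [DecidableEq m] :
    MeasurableSet {U : Matrix n m ℝ | Uᵀ * U = 1} := by
  simp only [← Matrix.ext_iff, Matrix.mul_apply, Matrix.transpose_apply, ofPred_forall]
  exact .iInter fun i => .iInter fun j => measurableSet_eq_fun (Finset.measurable_sum _ fun c _ =>
    (measurable_matrix_apply c i).mul (measurable_matrix_apply c j)) measurable_const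

lemma orthonormal_toLp_transpose [DecidableEq m] {U : Matrix n m ℝ} (hU : Uᵀ * U = 1) :
    Orthonormal ℝ fun j => WithLp.toLp 2 (Uᵀ j) := by
  refine orthonormal_iff_ite.2 fun j k => ?_
  rw [← Matrix.one_apply, ← hU, EuclideanSpace.inner_toLp_toLp, dotProduct_comm]
  rfl

lemma exists_orthogonal_row_eq [DecidableEq n] (i : n) {x : EuclideanSpace ℝ n} (hx : ‖x‖ = 1) :
    ∃ Q : Matrix n n ℝ, Qᵀ * Q = 1 ∧ Q i = x.ofLp := by
  have hon : Orthonormal ℝ (({i} : Set n).domRestrict fun _ : n => x) :=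
    ⟨fun _ => hx, fun a b hab => absurd (Subsingleton.elim a b) hab⟩
  obtain ⟨b, hb⟩ := hon.exists_orthonormalBasis_extension_of_card_eq finrank_euclideanSpace
  refine ⟨Matrix.of fun a => (b a).ofLp, mul_eq_one_comm.1 ?_, congrArg WithLp.ofLp (hb i rfl)⟩
  ext a c
  rw [Matrix.one_apply, ← orthonormal_iff_ite.1 b.orthonormal a c,
    EuclideanSpace.inner_eq_star_dotProduct, dotProduct_comm]
  rfl

end OrthonormalColumns

section Stiefel

variable {d n : ℕ} {μ : Measure (Matrix (Fin n) (Fin d) ℝ)}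

lemma rowNorm_sq (U : Matrix (Fin n) (Fin d) ℝ) (i : Fin n) :
    rowNorm U i ^ 2 = ∑ j, U i j ^ 2 :=
  sq_sqrt (Finset.sum_nonneg fun _ _ => sq_nonneg _)

lemma measurable_rowNorm (i : Fin n) :
    Measurable fun U : Matrix (Fin n) (Fin d) ℝ => rowNorm U i :=
  (Finset.measurable_sum _ fun j _ => (measurable_matrix_apply i j).pow_const 2).sqrt

lemma map_sum_vecMul_sq_div_norm_sq_stdGaussian {U : Matrix (Fin n) (Fin d) ℝ} (hU : Uᵀ * U = 1)
    (hd : d ≠ 0) (hdn : d < n) :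
    (stdGaussian (EuclideanSpace ℝ (Fin n))).map
      (fun x => (∑ j, (x.ofLp ᵥ* U) j ^ 2) / ‖x‖ ^ 2) = betaMeasure (d / 2) ((n - d) / 2) := by
  have : Nonempty (Fin d) := Fin.pos_iff_nonempty.1 (Nat.pos_of_ne_zero hd)
  have : Nonempty (Fin (n - d)) := Fin.pos_iff_nonempty.1 (Nat.sub_pos_of_lt hdn)
  obtain ⟨b, hb⟩ := exists_orthonormalBasis_sum_extension (κ' := Fin (n - d))
    (orthonormal_toLp_transpose hU)
    (by simp only [finrank_euclideanSpace, Fintype.card_fin, Nat.add_sub_cancel' hdn.le])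
  have h := map_sum_inner_sq_div_norm_sq_stdGaussian b
  simp only [hb, Fintype.card_fin, Nat.cast_sub hdn.le,
    EuclideanSpace.inner_eq_star_dotProduct] at h
  exact h

lemma map_sum_vecMul_sq_div_norm_sq (hinv : ∀ Q : Matrix (Fin n) (Fin n) ℝ, Qᵀ * Q = 1 →
      μ.map (fun U => Q * U) = μ) (i : Fin n) {x : EuclideanSpace ℝ (Fin n)} (hx : x ≠ 0) :
    μ.map (fun U => (∑ j, (x.ofLp ᵥ* U) j ^ 2) / ‖x‖ ^ 2) = μ.map (fun U => rowNorm U i ^ 2) := by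
  obtain ⟨Q, hQ, hQi⟩ := exists_orthogonal_row_eq i (norm_smul_inv_norm (𝕜 := ℝ) hx)
  conv_rhs => rw [← hinv Q hQ, Measure.map_map ((measurable_rowNorm i).pow_const 2)
    (measurable_matrix_mul Q)]
  congr with U
  simp only [Function.comp_apply, rowNorm_sq, Matrix.mul_apply_eq_vecMul, hQi, WithLp.ofLp_smul,
    smul_vecMul, Pi.smul_apply, smul_eq_mul, mul_pow, ← Finset.mul_sum]
  simp only [div_eq_inv_mul, ringHom_apply, inv_pow]

variable [IsProbabilityMeasure μ]

/-- Testing `U` against an independent Gaussian vector: for fixed `U` the projection ratio is a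
beta variable, and for a fixed vector it has the law of a squared row norm, by invariance. -/
theorem map_rowNorm_sq (hd : d ≠ 0) (hdn : d < n) (hsupp : μ {U | Uᵀ * U = 1} = 1)
    (hinv : ∀ Q : Matrix (Fin n) (Fin n) ℝ, Qᵀ * Q = 1 → μ.map (fun U => Q * U) = μ)
    (i : Fin n) : μ.map (fun U => rowNorm U i ^ 2) = betaMeasure (d / 2) ((n - d) / 2) := by
  have : Nonempty (Fin n) := ⟨i⟩
  set γ := stdGaussian (EuclideanSpace ℝ (Fin n))
  let f : Matrix (Fin n) (Fin d) ℝ × EuclideanSpace ℝ (Fin n) → ℝ :=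
    fun p => (∑ j, (p.2.ofLp ᵥ* p.1) j ^ 2) / ‖p.2‖ ^ 2
  have hf : Measurable f := by
    simp only [f, vecMul, dotProduct]
    refine (Finset.measurable_sum _ fun j _ => ?_).div (by fun_prop)
    refine (Finset.measurable_sum _ fun c _ => ?_).pow_const 2
    exact Measurable.mul (by fun_prop) ((measurable_matrix_apply c j).comp measurable_fst)
  have hμ : ∀ᵐ U ∂μ, Uᵀ * U = 1 :=
    (prob_compl_eq_zero_iff measurableSet_transpose_mul_self_eq_one).2 hsupp
  have hγ : ∀ᵐ x ∂γ, x ≠ 0 := by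
    refine measure_mono_null (fun x hx => not_not.1 hx) (stdGaussian_singleton 0)
  have hbeta : (μ.prod γ).map f = betaMeasure (d / 2) ((n - d) / 2) :=
    map_prod_eq_of_ae_map_eq hf
      (hμ.mono fun U hU => map_sum_vecMul_sq_div_norm_sq_stdGaussian hU hd hdn)
  rw [← hbeta, ← Measure.prod_swap, Measure.map_map hf measurable_swap]
  exact (map_prod_eq_of_ae_map_eq (hf.comp measurable_swap)
    (hγ.mono fun x hx => map_sum_vecMul_sq_div_norm_sq hinv i hx)).symm

lemma measure_le_rowNorm (hd : d ≠ 0) (hdn : d + 1 < n) (hsupp : μ {U | Uᵀ * U = 1} = 1)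
    (hinv : ∀ Q : Matrix (Fin n) (Fin n) ℝ, Qᵀ * Q = 1 → μ.map (fun U => Q * U) = μ)
    {s : ℝ} (hs : s ∈ Icc 0 1) (i : Fin n) :
    μ {U | s ≤ rowNorm U i} =
      ENNReal.ofReal (∫ x in s..1, sqrtBetaPDF (d / 2) ((n - d) / 2) x) := by
  have hd' : (1 : ℝ) ≤ d := by exact_mod_cast Nat.one_le_iff_ne_zero.2 hd
  have hdn' : (d + 2 : ℝ) ≤ n := by exact_mod_cast hdn
  rw [← betaMeasure_Ici_sq (by linarith) (by linarith) hs,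
    ← map_rowNorm_sq hd (by omega) hsupp hinv i,
    Measure.map_apply ((measurable_rowNorm i).pow_const 2) measurableSet_Ici]
  congr 1
  ext U
  exact (pow_le_pow_iff_left₀ hs.1 (sqrt_nonneg _) two_ne_zero).symm

lemma measure_le_ciSup_rowNorm_le (hd : d ≠ 0) (hdn : d + 1 < n)
    (hsupp : μ {U | Uᵀ * U = 1} = 1)
    (hinv : ∀ Q : Matrix (Fin n) (Fin n) ℝ, Qᵀ * Q = 1 → μ.map (fun U => Q * U) = μ)
    {s : ℝ} (hs : s ∈ Icc 0 1) :
    μ {U | s ≤ ⨆ i, rowNorm U i} ≤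
      ENNReal.ofReal (n * ∫ x in s..1, sqrtBetaPDF (d / 2) ((n - d) / 2) x) := by
  have : Nonempty (Fin n) := ⟨0, by omega⟩
  refine (measure_le_ciSup_le μ (fun i U => rowNorm U i) s).trans_eq ?_
  simp only [measure_le_rowNorm hd hdn hsupp hinv hs, Finset.sum_const, Finset.card_univ,
    Fintype.card_fin, nsmul_eq_mul, ENNReal.ofReal_mul n.cast_nonneg, ENNReal.ofReal_natCast]

end Stiefel

section MeanOfMaximum

variable {μ ν : Measure ℝ} {n : ℕ}

/-- The expectation of `max √X₁, …, √Xₙ` for independent nonnegative variables `Xᵢ` of law `μ`,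
written as the integral of the tail `1 - ℙ(√X₁ ≤ r) ^ n`. -/
def meanMaxSqrt (μ : Measure ℝ) (n : ℕ) : ℝ≥0∞ :=
  ∫⁻ r in Ioi 0, ENNReal.ofReal (1 - cdf μ (r ^ 2) ^ n)

@[fun_prop]
lemma measurable_cdf (μ : Measure ℝ) : Measurable (cdf μ) :=
  (cdf μ).mono.measurable

lemma cdf_pow_mem_Icc (μ : Measure ℝ) (x : ℝ) (n : ℕ) : cdf μ x ^ n ∈ Icc 0 1 :=
  ⟨pow_nonneg (cdf_nonneg μ x) n, pow_le_one₀ (cdf_nonneg μ x) (cdf_le_one μ x)⟩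

lemma meanMaxSqrt_le_mul_lintegral_sqrt [IsProbabilityMeasure μ] :
    meanMaxSqrt μ n ≤ n * ∫⁻ x, ENNReal.ofReal √x ∂μ := by
  have htail {r : ℝ} (hr : 0 < r) : ENNReal.ofReal (1 - cdf μ (r ^ 2)) = μ {x | r < √x} := by
    have hset : {x | r < √x} = (Iic (r ^ 2))ᶜ := by
      ext x
      simp only [mem_ofPred_eq, compl_Iic, mem_Ioi, lt_sqrt hr.le]
    rw [hset, cdf_eq_real, ← probReal_compl_eq_one_sub measurableSet_Iic, ofReal_measureReal]
  rw [lintegral_eq_lintegral_meas_lt μ (.of_forall fun x => sqrt_nonneg x) (by fun_prop),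
    ← lintegral_const_mul' _ _ (ENNReal.natCast_ne_top n)]
  refine setLIntegral_mono' measurableSet_Ioi fun r hr => ?_
  rw [← htail hr, ← ENNReal.ofReal_natCast, ← ENNReal.ofReal_mul n.cast_nonneg]
  refine ENNReal.ofReal_le_ofReal ?_
  have h := one_add_mul_le_pow (a := cdf μ (r ^ 2) - 1) (by linarith [cdf_nonneg μ (r ^ 2)]) n
  rw [add_sub_cancel] at h
  linarith

lemma setLIntegral_Ioi_comp_div {c : ℝ} (hc : 0 < c) {f : ℝ → ℝ≥0∞} (hf : Measurable f) :
    ∫⁻ r in Ioi 0, f (r / c) = ENNReal.ofReal c * ∫⁻ r in Ioi 0, f r := by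
  have h := setLIntegral_map (μ := volume) measurableSet_Ioi hf
    (measurable_mul_const c⁻¹) (s := Ioi 0)
  have hpre : (fun x => x * c⁻¹) ⁻¹' Ioi 0 = Ioi 0 := by
    ext x
    simp only [mem_preimage, mem_Ioi, mul_pos_iff_of_pos_right (inv_pos.2 hc)]
  rw [Real.map_volume_mul_right (inv_ne_zero hc.ne'), inv_inv, abs_of_pos hc,
    Measure.restrict_smul, lintegral_smul_measure, hpre, smul_eq_mul] at h
  simp only [div_eq_mul_inv, h]

lemma cdf_map_mul_prod [IsProbabilityMeasure μ] [IsProbabilityMeasure ν] (hν : ∀ᵐ w ∂ν, 0 < w)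
    (y : ℝ) : cdf ((μ.prod ν).map fun p => p.1 * p.2) y = ∫ w, cdf μ (y / w) ∂ν := by
  have := Measure.isProbabilityMeasure_map (μ := μ.prod ν) (f := fun p => p.1 * p.2) (by fun_prop)
  have hmeas : MeasurableSet ((fun p : ℝ × ℝ => p.1 * p.2) ⁻¹' Iic y) :=
    measurableSet_Iic.preimage (by fun_prop)
  rw [cdf_eq_real, measureReal_def, Measure.map_apply (by fun_prop) measurableSet_Iic,
    Measure.prod_apply_symm hmeas,
    ← integral_toReal (measurable_measure_prodMk_right hmeas).aemeasurable
      (.of_forall fun w => measure_lt_top _ _)]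
  refine integral_congr_ae ?_
  filter_upwards [hν] with w hw
  rw [cdf_eq_real, measureReal_def]
  congr 2
  ext x
  simp only [mem_preimage, mem_Iic, le_div_iff₀ hw]

/-- Conditioning on the common factor: by Jensen's inequality for `x ↦ x ^ n`, independent copies
of the factor have a larger maximum in the mean than one shared copy. -/
theorem lintegral_sqrt_mul_meanMaxSqrt_le [IsProbabilityMeasure μ] [IsProbabilityMeasure ν]
    (hν : ∀ᵐ w ∂ν, 0 < w) :
    (∫⁻ w, ENNReal.ofReal √w ∂ν) * meanMaxSqrt μ n ≤
      meanMaxSqrt ((μ.prod ν).map fun p => p.1 * p.2) n := by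
  have hint (y : ℝ) (k : ℕ) : Integrable (fun w => cdf μ (y / w) ^ k) ν :=
    .of_mem_Icc 0 1 (by fun_prop) (.of_forall fun w => cdf_pow_mem_Icc μ _ k)
  have hjensen (y : ℝ) : (∫ w, cdf μ (y / w) ∂ν) ^ n ≤ ∫ w, cdf μ (y / w) ^ n ∂ν :=
    (convexOn_pow n).map_integral_le (continuousOn_pow n) isClosed_Ici
      (.of_forall fun w => cdf_nonneg μ _) (by simpa using hint y 1) (hint y n)
  calc (∫⁻ w, ENNReal.ofReal √w ∂ν) * meanMaxSqrt μ n
      = ∫⁻ w, ENNReal.ofReal √w * meanMaxSqrt μ n ∂ν := by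
        rw [lintegral_mul_const _ (by fun_prop)]
    _ = ∫⁻ w, (∫⁻ r in Ioi 0, ENNReal.ofReal (1 - cdf μ (r ^ 2 / w) ^ n)) ∂ν := by
        refine lintegral_congr_ae ?_
        filter_upwards [hν] with w hw
        rw [meanMaxSqrt, ← setLIntegral_Ioi_comp_div (sqrt_pos.2 hw) (by fun_prop)]
        simp only [div_pow, sq_sqrt hw.le]
    _ = ∫⁻ r in Ioi 0, ∫⁻ w, ENNReal.ofReal (1 - cdf μ (r ^ 2 / w) ^ n) ∂ν :=
        lintegral_lintegral_swap (by fun_prop)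
    _ ≤ meanMaxSqrt ((μ.prod ν).map fun p => p.1 * p.2) n := by
        refine lintegral_mono fun r => ?_
        have hint' : Integrable (fun w => 1 - cdf μ (r ^ 2 / w) ^ n) ν :=
          (integrable_const 1).sub (hint _ n)
        rw [← ofReal_integral_eq_lintegral_ofReal hint'
            (.of_forall fun w => sub_nonneg.2 (cdf_pow_mem_Icc μ _ n).2),
          MeasureTheory.integral_sub (integrable_const 1) (hint _ n),
          MeasureTheory.integral_const, probReal_univ, one_smul, cdf_map_mul_prod hν]
        exact ENNReal.ofReal_le_ofReal (sub_le_sub_left (hjensen _) 1)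

end MeanOfMaximum

section GammaBetaMeans

variable {a b c : ℝ} {n : ℕ}

lemma gammaPDFReal_mul_sqrt (hc : 0 < c) {w : ℝ} (hw : 0 < w) :
    gammaPDFReal c 1 w * √w = Gamma (c + 1 / 2) / Gamma c * gammaPDFReal (c + 1 / 2) 1 w := by
  have hpow : w ^ (c + 1 / 2 - 1) = w ^ (c - 1) * √w := by
    rw [sqrt_eq_rpow, ← rpow_add hw]
    congr 1
    ring
  rw [gammaPDFReal, gammaPDFReal, if_pos hw.le, if_pos hw.le, hpow, one_rpow, one_rpow]
  field_simp

lemma lintegral_sqrt_gammaMeasure (hc : 0 < c) :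
    ∫⁻ w, ENNReal.ofReal √w ∂gammaMeasure c 1 = ENNReal.ofReal (Gamma (c + 1 / 2) / Gamma c) := by
  have hc' : 0 < c + 1 / 2 := by linarith
  have hratio : 0 ≤ Gamma (c + 1 / 2) / Gamma c :=
    (div_pos (Gamma_pos_of_pos hc') (Gamma_pos_of_pos hc)).le
  calc ∫⁻ w, ENNReal.ofReal √w ∂gammaMeasure c 1
      = ∫⁻ w, gammaPDF c 1 w * ENNReal.ofReal √w := lintegral_gammaMeasure (by fun_prop)
    _ = ∫⁻ w, ENNReal.ofReal (Gamma (c + 1 / 2) / Gamma c) * gammaPDF (c + 1 / 2) 1 w := by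
        refine lintegral_congr_ae ?_
        filter_upwards [volume.ae_ne 0] with w hw
        rcases hw.lt_or_gt with hw | hw
        · rw [gammaPDF_of_neg hw, gammaPDF_of_neg hw, zero_mul, mul_zero]
        · rw [gammaPDF, gammaPDF, ← ENNReal.ofReal_mul (gammaPDFReal_nonneg hc one_pos w),
            ← ENNReal.ofReal_mul hratio, gammaPDFReal_mul_sqrt hc hw]
    _ = ENNReal.ofReal (Gamma (c + 1 / 2) / Gamma c) := by
        rw [lintegral_const_mul _ (by fun_prop), lintegral_gammaPDF_eq_one hc' one_pos, mul_one]

lemma sqrt_sub_half_le_Gamma_div_Gamma (hc : 1 / 2 < c) :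
    √(c - 1 / 2) ≤ Gamma (c + 1 / 2) / Gamma c := by
  have hc' : 0 < c - 1 / 2 := by linarith
  have h₁ : 0 < Gamma c := Gamma_pos_of_pos (by linarith)
  have h₂ : 0 < Gamma (c + 1 / 2) := Gamma_pos_of_pos (by linarith)
  have hrec : Gamma (c + 1 / 2) = (c - 1 / 2) * Gamma (c - 1 / 2) := by
    rw [← Gamma_add_one hc'.ne']
    congr 1
    ring
  have hconvex : Gamma c ≤ √(Gamma (c - 1 / 2)) * √(Gamma (c + 1 / 2)) := by
    have h := Gamma_mul_add_mul_le_rpow_Gamma_mul_rpow_Gamma hc' (by linarith : 0 < c + 1 / 2)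
      one_half_pos one_half_pos (add_halves 1)
    rw [sqrt_eq_rpow, sqrt_eq_rpow]
    convert h using 2
    ring
  rw [le_div_iff₀ h₁]
  calc √(c - 1 / 2) * Gamma c
      ≤ √(c - 1 / 2) * (√(Gamma (c - 1 / 2)) * √(Gamma (c + 1 / 2))) := by gcongr
    _ = √(Gamma (c + 1 / 2)) * √(Gamma (c + 1 / 2)) := by
        rw [← mul_assoc, ← sqrt_mul hc'.le, ← hrec]
    _ = Gamma (c + 1 / 2) := mul_self_sqrt h₂.le

lemma cdf_gammaMeasure_eq_lowerIncGamma_div (ha : 0 < a) {y : ℝ} (hy : 0 ≤ y) :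
    cdf (gammaMeasure a 1) y = lowerIncGamma a y / Gamma a := by
  have hae : ∀ᵐ t, t ∈ Iic y → gammaPDFReal a 1 t =
      (Ioc 0 y).indicator (fun t => t ^ (a - 1) * exp (-t) / Gamma a) t := by
    filter_upwards [volume.ae_ne 0] with t ht hty
    rcases ht.lt_or_gt with ht | ht
    · rw [gammaPDFReal, if_neg ht.not_ge, indicator_of_notMem fun h => ht.not_gt h.1]
    · rw [gammaPDFReal, if_pos ht.le, indicator_of_mem (mem_Ioc.2 ⟨ht, hty⟩), one_rpow, one_mul]
      ring
  rw [cdf_gammaMeasure_eq_integral ha one_pos, setIntegral_congr_ae measurableSet_Iic hae,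
    setIntegral_indicator measurableSet_Ioc, inter_eq_right.2 Ioc_subset_Iic_self,
    MeasureTheory.integral_div, ← integral_of_le hy, lowerIncGamma]

lemma meanMaxSqrt_gammaMeasure (ha : 0 < a) : meanMaxSqrt (gammaMeasure a 1) n =
    ENNReal.ofReal ((∫ y in Ioi 0, (1 - (lowerIncGamma a y / Gamma a) ^ n) / √y) / 2) := by
  have := isProbabilityMeasure_gammaMeasure ha one_pos
  have hfin : meanMaxSqrt (gammaMeasure a 1) n ≠ ∞ := by
    refine ne_top_of_le_ne_top ?_ meanMaxSqrt_le_mul_lintegral_sqrt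
    rw [lintegral_sqrt_gammaMeasure ha]
    exact ENNReal.mul_ne_top (ENNReal.natCast_ne_top n) ENNReal.ofReal_ne_top
  have hsubst : ∫ y in Ioi 0, (1 - (lowerIncGamma a y / Gamma a) ^ n) / √y =
      2 * ∫ r in Ioi 0, (1 - cdf (gammaMeasure a 1) (r ^ 2) ^ n) := by
    rw [← integral_comp_rpow_Ioi_of_pos two_pos, ← MeasureTheory.integral_const_mul]
    refine setIntegral_congr_fun measurableSet_Ioi fun r hr => ?_
    have hr : 0 < r := hr
    simp only [rpow_two, sqrt_sq hr.le, smul_eq_mul,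
      cdf_gammaMeasure_eq_lowerIncGamma_div ha (sq_nonneg r)]
    norm_num
    field_simp
  rw [hsubst, mul_div_cancel_left₀ _ two_ne_zero, integral_eq_lintegral_of_nonneg_ae
    (.of_forall fun r => sub_nonneg.2 (cdf_pow_mem_Icc _ _ n).2)
    (Measurable.aestronglyMeasurable (by fun_prop)), ← meanMaxSqrt, ENNReal.ofReal_toReal hfin]

lemma cdf_betaMeasure_of_one_le (ha : 0 < a) (hb : 0 < b) {y : ℝ} (hy : 1 ≤ y) :
    cdf (betaMeasure a b) y = 1 := by
  have := isProbabilityMeasureBeta ha hb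
  have hnull : (betaMeasure a b).real (Iic y)ᶜ = 0 := by
    rw [measureReal_def, compl_Iic, betaMeasure, withDensity_apply _ measurableSet_Ioi,
      setLIntegral_eq_zero measurableSet_Ioi fun x hx =>
        betaPDF_eq_zero_of_one_le (hy.trans (le_of_lt hx)), ENNReal.toReal_zero]
  rw [cdf_eq_real]
  linarith [probReal_compl_eq_one_sub (μ := betaMeasure a b) (measurableSet_Iic (a := y))]

lemma meanMaxSqrt_betaMeasure (ha : 1 / 2 ≤ a) (hb : 1 ≤ b) : meanMaxSqrt (betaMeasure a b) n =
    ENNReal.ofReal (∫ x in (0 : ℝ)..1, (1 - (∫ u in (0 : ℝ)..x, sqrtBetaPDF a b u) ^ n)) := by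
  have htail : ∫⁻ r in Ioi 1, ENNReal.ofReal (1 - cdf (betaMeasure a b) (r ^ 2) ^ n) = 0 :=
    setLIntegral_eq_zero measurableSet_Ioi fun r hr => by
      rw [cdf_betaMeasure_of_one_le (by linarith) (by linarith)
        (one_le_pow₀ (le_of_lt hr)), one_pow, sub_self, ENNReal.ofReal_zero, Pi.zero_apply]
  have hint : IntegrableOn (fun r => 1 - cdf (betaMeasure a b) (r ^ 2) ^ n) (Ioc 0 1) :=
    (integrable_const 1).sub
      (.of_mem_Icc 0 1 (by fun_prop) (.of_forall fun r => cdf_pow_mem_Icc _ _ n))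
  rw [meanMaxSqrt, ← Ioc_union_Ioi_eq_Ioi zero_le_one,
    lintegral_union measurableSet_Ioi Ioc_disjoint_Ioi_same, htail, add_zero,
    ← ofReal_integral_eq_lintegral_ofReal hint
      (.of_forall fun r => sub_nonneg.2 (cdf_pow_mem_Icc _ _ n).2), integral_of_le zero_le_one]
  congr 1
  refine setIntegral_congr_fun measurableSet_Ioc fun r hr => ?_
  simp only [cdf_betaMeasure_sq ha hb (Ioc_subset_Icc_self hr)]

/-- Multiplying a `Beta(a, b)` variable by an independent `Gamma(a + b)` variable gives a
`Gamma(a)` variable, and the root of the factor has mean at least `√(a + b - 1 / 2)`. -/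
theorem sqrt_mul_integral_one_sub_pow_le (ha : 1 / 2 ≤ a) (hb : 1 ≤ b) :
    √(a + b - 1 / 2) * ∫ x in (0 : ℝ)..1, (1 - (∫ u in (0 : ℝ)..x, sqrtBetaPDF a b u) ^ n) ≤
      (∫ y in Ioi 0, (1 - (lowerIncGamma a y / Gamma a) ^ n) / √y) / 2 := by
  have ha0 : 0 < a := by linarith
  have hb0 : 0 < b := by linarith
  have := isProbabilityMeasureBeta ha0 hb0
  have := isProbabilityMeasure_gammaMeasure (add_pos ha0 hb0) one_pos
  have hnonneg : 0 ≤ ∫ y in Ioi 0, (1 - (lowerIncGamma a y / Gamma a) ^ n) / √y :=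
    setIntegral_nonneg measurableSet_Ioi fun y hy => by
      rw [← cdf_gammaMeasure_eq_lowerIncGamma_div ha0 (le_of_lt hy)]
      exact div_nonneg (sub_nonneg.2 (cdf_pow_mem_Icc _ y n).2) (sqrt_nonneg y)
  have hroot : ENNReal.ofReal √(a + b - 1 / 2) ≤
      ∫⁻ w, ENNReal.ofReal √w ∂gammaMeasure (a + b) 1 := by
    rw [lintegral_sqrt_gammaMeasure (add_pos ha0 hb0)]
    exact ENNReal.ofReal_le_ofReal (sqrt_sub_half_le_Gamma_div_Gamma (by linarith))
  have h := (mul_le_mul_left hroot (meanMaxSqrt (betaMeasure a b) n)).trans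
    (lintegral_sqrt_mul_meanMaxSqrt_le (ae_pos_gammaMeasure (a + b) 1))
  rwa [map_mul_betaMeasure_prod_gammaMeasure ha0 hb0 one_pos, meanMaxSqrt_gammaMeasure ha0,
    meanMaxSqrt_betaMeasure ha hb, ← ENNReal.ofReal_mul (sqrt_nonneg _),
    ENNReal.ofReal_le_ofReal_iff (by positivity)] at h

end GammaBetaMeans

section StiefelConstant

variable {d n : ℕ}

lemma sqrt_le_one_add_div_mul_sqrt {d n : ℝ} (hd : 2 ≤ d) (hdn : d ≤ n) :
    √n ≤ (1 + d / (2 * n)) * √(n - 1) := by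
  have hn : 0 < n := by linarith
  have hn1 : 0 ≤ n - 1 := by linarith
  have hid : (1 + d / (2 * n)) ^ 2 * (n - 1) =
      n + (d - 1 - d / n) + (d / (2 * n)) ^ 2 * (n - 1) := by
    field_simp
    ring
  have hdn1 : d / n ≤ 1 := (div_le_one hn).2 hdn
  have hsq : 0 ≤ (d / (2 * n)) ^ 2 * (n - 1) := by positivity
  refine sqrt_le_iff.2 ⟨by positivity, ?_⟩
  rw [mul_pow, sq_sqrt hn1]
  linarith

lemma integral_one_sub_pow_le_stiefelK_add (hd : 2 ≤ d) (hdn : d + 1 < n) :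
    ∫ x in (0 : ℝ)..1, (1 - (∫ u in (0 : ℝ)..x, sqrtBetaPDF (d / 2) ((n - d) / 2) u) ^ n) ≤
      stiefelK d n + √(d / n) := by
  have hd' : (2 : ℝ) ≤ d := by exact_mod_cast hd
  have hdn' : (d + 2 : ℝ) ≤ n := by exact_mod_cast hdn
  have hn : (0 : ℝ) < n := by linarith
  have ha : (1 / 2 : ℝ) ≤ d / 2 := by linarith
  have hb : (1 : ℝ) ≤ (n - d) / 2 := by linarith
  have hmean := sqrt_mul_integral_one_sub_pow_le (n := n) ha hb
  set m : ℝ := ∫ x in (0 : ℝ)..1,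
    (1 - (∫ u in (0 : ℝ)..x, sqrtBetaPDF (d / 2) ((n - d) / 2) u) ^ n)
  set I : ℝ := ∫ y in Ioi 0, (1 - (lowerIncGamma (d / 2) y / Gamma (d / 2)) ^ n) / √y with hI
  rw [show (d / 2 + (n - d) / 2 - 1 / 2 : ℝ) = (n - 1) / 2 by ring,
    sqrt_div (by linarith : (0 : ℝ) ≤ n - 1)] at hmean
  have hm : 0 < m := (isStronglyLogConcave_sqrtBetaPDF ha hb).integral_one_sub_integral_pow_pos
    one_pos (integral_sqrtBetaPDF ha hb) (by omega)
  have hroot := sqrt_le_one_add_div_mul_sqrt hd' (by linarith : (d : ℝ) ≤ n)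
  have hI2 : √(n - 1) * m ≤ I / √2 := by
    rw [div_mul_eq_mul_div, div_le_iff₀ (by positivity)] at hmean
    refine hmean.trans_eq ?_
    rw [div_mul_eq_mul_div, div_eq_div_iff two_ne_zero (by positivity), mul_assoc,
      mul_self_sqrt zero_le_two]
  rw [stiefelK, sub_add_cancel, ← hI]
  calc m = √n * m / √n := by field_simp
    _ ≤ (1 + d / (2 * n)) * √(n - 1) * m / √n := by gcongr
    _ = (1 + d / (2 * n)) * (√(n - 1) * m) / √n := by rw [mul_assoc]
    _ ≤ (1 + d / (2 * n)) * (I / √2) / √n := by gcongr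
    _ = (1 + d / (2 * n)) * (1 / √(2 * n)) * I := by
        rw [sqrt_mul zero_le_two]
        field_simp

end StiefelConstant

/-- **Sharper concentration over the Stiefel manifold.**
Let `μ` be the symmetric measure on the Stiefel manifold `St(n,d) = {U : Uᵀ U = I_d}`,
characterized as a probability measure on `n × d` matrices supported on `St(n,d)` and
invariant under left multiplication by every orthogonal `n × n` matrix. If `d ≥ 2`,
`n > d + 1` and `ε > 0` satisfies `K < ε`, then
`ℙ(max_i ‖u_i‖ - √(d/n) ≥ ε) ≤ exp(-(n-2)(ε-K)²/8)`. -/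
theorem stiefel_concentration_sharp
    (d n : ℕ) (hd : 2 ≤ d) (hn : d + 1 < n)
    (μ : Measure (Matrix (Fin n) (Fin d) ℝ)) [IsProbabilityMeasure μ]
    (hsupp : μ {U : Matrix (Fin n) (Fin d) ℝ | Uᵀ * U = 1} = 1)
    (hinv : ∀ Q : Matrix (Fin n) (Fin n) ℝ, Qᵀ * Q = 1 →
      Measure.map (fun U => Q * U) μ = μ)
    (ε : ℝ) (hε : 0 < ε) (hK : stiefelK d n < ε) :
    μ {U : Matrix (Fin n) (Fin d) ℝ |
        ε ≤ (⨆ i : Fin n, rowNorm U i) - Real.sqrt ((d : ℝ) / n)}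
      ≤ ENNReal.ofReal
          (Real.exp (-((n - 2) * (ε - stiefelK d n) ^ 2) / 8)) := by
  have hd' : (2 : ℝ) ≤ d := by exact_mod_cast hd
  have hn' : (d + 2 : ℝ) ≤ n := by exact_mod_cast hn
  have ha : (1 / 2 : ℝ) ≤ d / 2 := by linarith
  have hb : (1 : ℝ) ≤ (n - d) / 2 := by linarith
  have hunion {s : ℝ} (hs : s ∈ Icc 0 1) :=
    measure_le_ciSup_rowNorm_le (by omega) hn hsupp hinv hs
  simp only [le_sub_iff_add_le]
  rcases le_or_gt (ε + √(d / n)) 1 with h1 | h1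
  · refine (hunion ⟨by positivity, h1⟩).trans (ENNReal.ofReal_le_ofReal ?_)
    have htail := (isStronglyLogConcave_sqrtBetaPDF ha hb).mul_integral_right_le_exp one_pos
      (integral_sqrtBetaPDF ha hb) (c := (n - 2) / 8) (M := stiefelK d n + √(d / n))
      (t := ε - stiefelK d n) (N := n) (by omega)
      (by simpa only [zero_add] using integral_one_sub_pow_le_stiefelK_add hd hn)
      (by linarith) (by linarith) (by linarith) (by linarith) (by linarith)
    convert htail using 3 <;> ring
  · refine (measure_mono fun U hU => h1.le.trans hU).trans
      ((hunion (right_mem_Icc.2 zero_le_one)).trans ?_)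
    simp only [integral_same, mul_zero, ENNReal.ofReal_zero, zero_le]
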